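/- arXiv:2004.09104 — 4 statements merged into one kernel-verified Lean document; each statement's English description precedes it below -/
import Mathlib

section
/- Let N ≥ 1, let α ∈ Pair_N and let j ∈ {1,…,2N−1} with {j,j+1} ∉ α. Then Z_{α/⨿_j} satisfies the following Möbius covariance with weights h = 1/4 at the unfused points and H = 1 at the fused point: for every Möbius map φ of the upper half-plane, φ(x) = (ax+b)/(cx+d) with ad−bc>0, such that φ is finite at all the points and φ(x_1)<⋯<φ(x_{j−1})<φ(ξ)<φ(x_{j+2})<⋯<φ(x_{2N}), one has Z_{α/⨿_j}(x_1,…,x_{j−1},ξ,x_{j+2},…,x_{2N}) = (∏_{i∉{j,j+1}} φ'(x_i)^{1/4}) · φ'(ξ) · Z_{α/⨿_j}(φ(x_1),…,φ(x_{j−1}),φ(ξ),φ(x_{j+2}),…,φ(x_{2N})) for all x_1<⋯<x_{j−1}<ξ<x_{j+2}<⋯<x_{2N}. -/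
/-! Every block occurring in `Z_{α/⨿_j}` is covariant by itself. Put
`w i = √(ad - bc) / |c x_i + d|`. As `φ` preserves the order of the points, all `c x_i + d` have
the same sign, so `φ(x_l) - φ(x_k) = w_k w_l (x_l - x_k)`, while `φ'(x_i) = w_i²`. The claim thus
reduces to counting exponents of the `w_i`, for which the only input is that the signs of a planar
pair partition sum to zero (`sum_pairSign`):

* the product over pairs of unfused points contributes `w_i` to the power `(σ_i T - 1) / 2`, where
  `T` is the sum of the signs of the unfused points (`prod_pairs_scale`);
* at a slope, `T = -2 σ_j`, and the factors `|x_i - ξ|` correct the exponents to `-1/2` at the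
  unfused points and `-2` at `ξ` (`Ufuse_covariant`);
* at a local minimum, `T = 0`, and `w_ξ / w_i = 1 + c (x_i - ξ) / (c ξ + d)`, whose second part
  contributes a multiple of `T` to the sum (`Vfuse_covariant`). -/

open Filter Finset
open scoped BigOperators Classical Topology

noncomputable section

/-- The open chamber `x 0 < x 1 < ⋯ < x (n-1)`. -/
def chamber (n : ℕ) : Set (Fin n → ℝ) := {x | ∀ i j : Fin n, i < j → x i < x j}

/-- Planar pair partitions of `{0, …, 2N-1}` (i.e. of `{1,…,2N}` in 1-based labelling),
encoded as noncrossing fixed-point-free involutions: the links are the pairs `{i, f i}`. -/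
def PlanarPair (N : ℕ) : Type :=
  {f : Fin (2 * N) → Fin (2 * N) //
    (∀ i, f (f i) = i) ∧ (∀ i, f i ≠ i) ∧
      ∀ i j, i < j → j < f i → i < f j ∧ f j < f i}

instance (N : ℕ) : Fintype (PlanarPair N) := by
  unfold PlanarPair; infer_instance

/-- The Dyck step sequence of a planar pair partition: `+1` at openers, `-1` at closers. -/
def pairSign {N : ℕ} (α : PlanarPair N) (i : Fin (2 * N)) : ℝ :=
  if i < α.val i then 1 else -1

/-- The conformal block of a sign sequence: `∏_{i<j} (x_j - x_i)^{σ_i σ_j / 2}`. -/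
def cblock {n : ℕ} (σ : Fin n → ℝ) (x : Fin n → ℝ) : ℝ :=
  ∏ p ∈ univ.filter (fun p : Fin n × Fin n => p.1 < p.2),
    (x p.2 - x p.1) ^ (σ p.1 * σ p.2 / 2)

/-- `σ` is the step sequence of a Dyck path. -/
def IsDyck {n : ℕ} (σ : Fin n → ℝ) : Prop :=
  (∀ i, σ i = 1 ∨ σ i = -1) ∧
    (∀ k : Fin n, 0 ≤ ∑ i ∈ univ.filter (fun i : Fin n => i ≤ k), σ i) ∧
    ∑ i, σ i = 0

/-- The relation `α ⟵ β`: every link of `β` joins an opener of `α` to a closer of `α`. -/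
def kwRel {N : ℕ} (α β : PlanarPair N) : Prop :=
  ∀ i, (i < α.val i) ↔ ¬ β.val i < α.val (β.val i)

/-- The incidence matrix `M` of the relation `⟵`. -/
def Mmat (N : ℕ) : Matrix (PlanarPair N) (PlanarPair N) ℝ :=
  fun α β => if kwRel α β then 1 else 0

/-- The κ = 4 pure partition functions `Z_α = Σ_β (M⁻¹)_{α,β} U_β`. -/
def pureZ {N : ℕ} (α : PlanarPair N) (x : Fin (2 * N) → ℝ) : ℝ :=
  ∑ β : PlanarPair N, (Mmat N)⁻¹ α β * cblock (pairSign β) x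

/-- Partial derivative in the `i`-th coordinate. -/
def pd {n : ℕ} (i : Fin n) (f : (Fin n → ℝ) → ℝ) : (Fin n → ℝ) → ℝ :=
  fun x => fderiv ℝ f x (Pi.single i 1)

/-- Doubling a configuration point: the limit point of total fusion. -/
def dup {N : ℕ} (y : Fin (2 * N) → ℝ) : Fin (2 * (2 * N)) → ℝ :=
  fun i => y ⟨i.val / 2, by have := i.2; omega⟩

/-- The fusion normalization `∏_j (x_{2j} - x_{2j-1})^{1/2}`. -/
def fuseDenom {N : ℕ} (x : Fin (2 * (2 * N)) → ℝ) : ℝ :=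
  ∏ j : Fin (2 * N),
    (x ⟨2 * j.val + 1, by have := j.2; omega⟩ - x ⟨2 * j.val, by have := j.2; omega⟩) ^
      ((1 : ℝ) / 2)

/-- `α` contains no link of the form `{2j-1, 2j}` (1-based). -/
def noFuseLink {N : ℕ} (α : PlanarPair (2 * N)) : Prop :=
  ∀ j : Fin (2 * N),
    α.val ⟨2 * j.val, by have := j.2; omega⟩ ≠ ⟨2 * j.val + 1, by have := j.2; omega⟩

/-- The fused pure partition function `Ẑ_α`, defined as the fusion limit. -/
def fusedZ {N : ℕ} (α : PlanarPair (2 * N)) (y : Fin (2 * N) → ℝ) : ℝ :=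
  limUnder (𝓝[chamber (2 * (2 * N))] dup y) fun x => pureZ α x / fuseDenom x

/-- The single-fusion of a conformal block with a slope at `j` (0-based `j`, `j+1`);
the fused point `ξ` sits at coordinate `j`, and coordinate `j+1` is ignored. -/
def Ufuse {n : ℕ} (σ : Fin n → ℝ) (j : ℕ) (hj : j + 1 < n) (x : Fin n → ℝ) : ℝ :=
  (∏ p ∈ univ.filter (fun p : Fin n × Fin n =>
      p.1 < p.2 ∧ p.1.val ≠ j ∧ p.1.val ≠ j + 1 ∧ p.2.val ≠ j ∧ p.2.val ≠ j + 1),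
    (x p.2 - x p.1) ^ (σ p.1 * σ p.2 / 2)) *
  ∏ i ∈ univ.filter (fun i : Fin n => i.val ≠ j ∧ i.val ≠ j + 1),
    |x i - x ⟨j, by omega⟩| ^ (σ i * σ ⟨j, by omega⟩)

/-- The single-fusion `V_{σ/∨_j}` of a conformal block with a local minimum at `j`. -/
def Vfuse {n : ℕ} (σ : Fin n → ℝ) (j : ℕ) (hj : j + 1 < n) (x : Fin n → ℝ) : ℝ :=
  (∏ p ∈ univ.filter (fun p : Fin n × Fin n =>
      p.1 < p.2 ∧ p.1.val ≠ j ∧ p.1.val ≠ j + 1 ∧ p.2.val ≠ j ∧ p.2.val ≠ j + 1),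
    (x p.2 - x p.1) ^ (σ p.1 * σ p.2 / 2)) *
  ∑ i ∈ univ.filter (fun i : Fin n => i.val ≠ j ∧ i.val ≠ j + 1),
    σ i * σ ⟨j, by omega⟩ / (x i - x ⟨j, by omega⟩)

/-- The single-fusion `Z_{α/⨿_j}` of a pure partition function. -/
def Zfuse {N : ℕ} (α : PlanarPair N) (j : ℕ) (hj : j + 1 < 2 * N) (x : Fin (2 * N) → ℝ) : ℝ :=
  (∑ β ∈ univ.filter (fun β : PlanarPair N =>
      pairSign β ⟨j, by omega⟩ = -1 ∧ pairSign β ⟨j + 1, hj⟩ = 1),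
    (Mmat N)⁻¹ α β * Vfuse (pairSign β) j hj x) +
  ∑ β ∈ univ.filter (fun β : PlanarPair N =>
      pairSign β ⟨j, by omega⟩ = pairSign β ⟨j + 1, hj⟩),
    (Mmat N)⁻¹ α β * Ufuse (pairSign β) j hj x

/-- The chamber `x_1 < ⋯ < x_{j-1} < ξ < x_{j+2} < ⋯` for single fusion at `j`:
coordinate `j` carries `ξ` and coordinate `j+1` is ignored. -/
def fusedChamber (n j : ℕ) : Set (Fin n → ℝ) :=
  {x | ∀ k l : Fin n, k < l → k.val ≠ j + 1 → l.val ≠ j + 1 → x k < x l}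

/-- Successor inside `Fin n` (identity at the top). -/
def fsucc {n : ℕ} (e : Fin n) : Fin n := if h : e.val + 1 < n then ⟨e.val + 1, h⟩ else e

/-- The set `J_n^m` of permutations from the fusion combinatorics. -/
def Jset (n m : ℕ) : Finset (Equiv.Perm (Fin n)) :=
  univ.filter fun σ =>
    (∀ k l : Fin n, k.val % 2 = 0 → l.val % 2 = 0 → k.val < l.val → l.val < 2 * m →
      σ k < σ l) ∧
    (∀ k : Fin n, k.val % 2 = 0 → k.val < 2 * m → σ k < σ (fsucc k)) ∧
    ∀ k l : Fin n, 2 * m ≤ k.val → k.val < l.val → σ k < σ l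

/-! ### Signs of planar pair partitions -/

/-- The signs of the two ends of a link cancel. -/
lemma sum_pairSign {N : ℕ} (β : PlanarPair N) : ∑ i, pairSign β i = 0 := by
  have hinv := β.2.1
  have hne := β.2.2.1
  refine Finset.sum_involution (fun i _ => β.val i) ?_ ?_ ?_ ?_
  · intro i _
    unfold pairSign
    rw [hinv i]
    rcases lt_or_gt_of_ne (hne i) with h | h
    · rw [if_neg (not_lt.2 h.le), if_pos h]; ring
    · rw [if_pos h, if_neg (not_lt.2 h.le)]; ring
  · intro i _ _
    exact hne i
  · intro i _
    exact mem_univ _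
  · intro i _
    exact hinv i

lemma pairSign_mul_self {N : ℕ} (β : PlanarPair N) (i : Fin (2 * N)) :
    pairSign β i * pairSign β i = 1 := by
  unfold pairSign; split_ifs <;> norm_num

/-- The sum of the signs of the points other than `j` and `j + 1`. -/
lemma sum_unfused {n : ℕ} (σ : Fin n → ℝ) (hσ : ∑ i, σ i = 0) (j : ℕ) (hj : j + 1 < n) :
    ∑ i ∈ univ.filter (fun i : Fin n => i.val ≠ j ∧ i.val ≠ j + 1), σ i =
      -(σ ⟨j, by omega⟩ + σ ⟨j + 1, hj⟩) := by
  have h := Finset.sum_filter_add_sum_filter_not univ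
    (fun i : Fin n => i.val ≠ j ∧ i.val ≠ j + 1) σ
  have h2 : univ.filter (fun i : Fin n => ¬ (i.val ≠ j ∧ i.val ≠ j + 1)) =
      {⟨j, by omega⟩, ⟨j + 1, hj⟩} := by
    ext i
    simp only [mem_filter, mem_univ, true_and, mem_insert, mem_singleton, Fin.ext_iff]
    tauto
  rw [h2, Finset.sum_pair (by simp [Fin.ext_iff]), hσ] at h
  linarith

/-! ### Rescaling the product over pairs -/

/-- The total weight with which each `u_i` occurs in the sum over pairs `k < l`; the `-1` is the
diagonal term `σ_i²` missing from `σ_i ∑ l, σ l`. -/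
lemma sum_pairs {n : ℕ} (S : Finset (Fin n)) (σ u : Fin n → ℝ) (h1 : ∀ i, σ i * σ i = 1) :
    ∑ p ∈ (S ×ˢ S).filter (fun p => p.1 < p.2), σ p.1 * σ p.2 / 2 * (u p.1 + u p.2) =
      ∑ i ∈ S, u i * ((σ i * (∑ l ∈ S, σ l) - 1) / 2) := by
  have key : ∀ i ∈ S, u i * ((σ i * (∑ l ∈ S, σ l) - 1) / 2) =
      ∑ l ∈ S, if i = l then 0 else σ i * σ l / 2 * u i := by
    intro i hi
    have : ∀ l ∈ S, (if i = l then 0 else σ i * σ l / 2 * u i) =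
        σ i * u i / 2 * σ l - if i = l then u i / 2 else 0 := by
      intro l _
      split_ifs with h
      · subst h; linear_combination (-u i / 2) * h1 i
      · ring
    rw [Finset.sum_congr rfl this, Finset.sum_sub_distrib, ← Finset.mul_sum,
      Finset.sum_ite_eq, if_pos hi]
    ring
  rw [Finset.sum_congr rfl key, Finset.sum_filter, Finset.sum_product]
  have split : ∀ i l, (if i = l then 0 else σ i * σ l / 2 * u i) =
      (if i < l then σ i * σ l / 2 * u i else 0) + (if l < i then σ i * σ l / 2 * u i else 0) := by
    intro i l
    rcases lt_trichotomy i l with h | h | h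
    · simp [h, h.ne, h.not_gt]
    · simp [h]
    · simp [h, h.ne', h.not_gt]
  simp only [split, Finset.sum_add_distrib]
  rw [Finset.sum_comm (f := fun i l => if l < i then σ i * σ l / 2 * u i else 0)]
  rw [← Finset.sum_add_distrib]
  refine Finset.sum_congr rfl fun i _ => ?_
  rw [← Finset.sum_add_distrib]
  refine Finset.sum_congr rfl fun l _ => ?_
  split_ifs <;> ring

/-- How the product over pairs of unfused points changes when all differences are rescaled by
`w_k w_l`. -/
lemma prod_pairs_scale {n : ℕ} (σ : Fin n → ℝ) (h1 : ∀ i, σ i * σ i = 1) (j : ℕ)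
    (x y w : Fin n → ℝ) (hw : ∀ i, i.val ≠ j + 1 → 0 < w i)
    (hx : ∀ k l : Fin n, k < l → k.val ≠ j + 1 → l.val ≠ j + 1 → x k < x l)
    (hy : ∀ k l : Fin n, k.val ≠ j + 1 → l.val ≠ j + 1 → y l - y k = w k * w l * (x l - x k)) :
    (∏ p ∈ univ.filter (fun p : Fin n × Fin n =>
      p.1 < p.2 ∧ p.1.val ≠ j ∧ p.1.val ≠ j + 1 ∧ p.2.val ≠ j ∧ p.2.val ≠ j + 1),
      (y p.2 - y p.1) ^ (σ p.1 * σ p.2 / 2)) =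
    (∏ i ∈ univ.filter (fun i : Fin n => i.val ≠ j ∧ i.val ≠ j + 1),
      w i ^ ((σ i * (∑ l ∈ univ.filter (fun i : Fin n => i.val ≠ j ∧ i.val ≠ j + 1), σ l) - 1)
        / 2)) *
    ∏ p ∈ univ.filter (fun p : Fin n × Fin n =>
      p.1 < p.2 ∧ p.1.val ≠ j ∧ p.1.val ≠ j + 1 ∧ p.2.val ≠ j ∧ p.2.val ≠ j + 1),
      (x p.2 - x p.1) ^ (σ p.1 * σ p.2 / 2) := by
  have e1 : ∀ p ∈ univ.filter (fun p : Fin n × Fin n =>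
      p.1 < p.2 ∧ p.1.val ≠ j ∧ p.1.val ≠ j + 1 ∧ p.2.val ≠ j ∧ p.2.val ≠ j + 1),
      (y p.2 - y p.1) ^ (σ p.1 * σ p.2 / 2) =
      Real.exp (σ p.1 * σ p.2 / 2 * (Real.log (w p.1) + Real.log (w p.2))) *
        (x p.2 - x p.1) ^ (σ p.1 * σ p.2 / 2) := by
    intro p hp
    simp only [mem_filter, mem_univ, true_and] at hp
    obtain ⟨hlt, -, hp1, -, hp2⟩ := hp
    have w1 := hw _ hp1
    have w2 := hw _ hp2
    rw [hy _ _ hp1 hp2, Real.mul_rpow (mul_pos w1 w2).le (sub_pos.2 (hx _ _ hlt hp1 hp2)).le,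
      Real.rpow_def_of_pos (mul_pos w1 w2), Real.log_mul w1.ne' w2.ne',
      mul_comm (Real.log (w p.1) + Real.log (w p.2))]
  have e2 : ∀ i ∈ univ.filter (fun i : Fin n => i.val ≠ j ∧ i.val ≠ j + 1),
      w i ^ ((σ i * (∑ l ∈ univ.filter (fun i : Fin n => i.val ≠ j ∧ i.val ≠ j + 1), σ l) - 1)
        / 2) = Real.exp (Real.log (w i) *
        ((σ i * (∑ l ∈ univ.filter (fun i : Fin n => i.val ≠ j ∧ i.val ≠ j + 1), σ l) - 1)
        / 2)) := by
    intro i hi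
    simp only [mem_filter, mem_univ, true_and] at hi
    rw [Real.rpow_def_of_pos (hw i hi.2)]
  rw [Finset.prod_congr rfl e1, Finset.prod_mul_distrib, Finset.prod_congr rfl e2,
    ← Real.exp_sum, ← Real.exp_sum, ← sum_pairs _ σ _ h1]
  congr 3
  ext p
  simp only [mem_filter, mem_univ, true_and, mem_product]
  tauto

/-! ### Covariance of the single blocks -/

/-- Covariance of a block with a slope at `j`. -/
lemma Ufuse_covariant {n : ℕ} (σ : Fin n → ℝ) (h1 : ∀ i, σ i * σ i = 1) (hσ : ∑ i, σ i = 0)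
    (j : ℕ) (hj : j + 1 < n) (hs : σ ⟨j, by omega⟩ = σ ⟨j + 1, hj⟩)
    (x y w : Fin n → ℝ) (hw : ∀ i, i.val ≠ j + 1 → 0 < w i)
    (hx : ∀ k l : Fin n, k < l → k.val ≠ j + 1 → l.val ≠ j + 1 → x k < x l)
    (hy : ∀ k l : Fin n, k.val ≠ j + 1 → l.val ≠ j + 1 → y l - y k = w k * w l * (x l - x k)) :
    Ufuse σ j hj x =
      (∏ i ∈ univ.filter (fun i : Fin n => i.val ≠ j ∧ i.val ≠ j + 1), w i ^ ((1 : ℝ) / 2)) *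
      w ⟨j, by omega⟩ ^ 2 * Ufuse σ j hj y := by
  have hT := sum_unfused σ hσ j hj
  have hwj : 0 < w ⟨j, by omega⟩ := hw _ (by simp)
  unfold Ufuse
  rw [prod_pairs_scale σ h1 j x y w hw hx hy]
  have e1 : ∀ i ∈ univ.filter (fun i : Fin n => i.val ≠ j ∧ i.val ≠ j + 1),
      |y i - y ⟨j, by omega⟩| ^ (σ i * σ ⟨j, by omega⟩) =
      w i ^ (σ i * σ ⟨j, by omega⟩) * w ⟨j, by omega⟩ ^ (σ i * σ ⟨j, by omega⟩) *
      |x i - x ⟨j, by omega⟩| ^ (σ i * σ ⟨j, by omega⟩) := by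
    intro i hi
    simp only [mem_filter, mem_univ, true_and] at hi
    have wi := hw i hi.2
    rw [hy _ _ (by simp) hi.2, abs_mul, abs_of_pos (mul_pos hwj wi),
      Real.mul_rpow (mul_pos hwj wi).le (abs_nonneg _), Real.mul_rpow hwj.le wi.le]
    ring
  have e2 : (∏ i ∈ univ.filter (fun i : Fin n => i.val ≠ j ∧ i.val ≠ j + 1),
      w ⟨j, by omega⟩ ^ (σ i * σ ⟨j, by omega⟩)) * w ⟨j, by omega⟩ ^ 2 = 1 := by
    rw [← Real.rpow_sum_of_pos hwj, ← Finset.sum_mul, hT, ← hs, ← Real.rpow_natCast,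
      ← Real.rpow_add hwj]
    have : -(σ ⟨j, by omega⟩ + σ ⟨j, by omega⟩) * σ ⟨j, by omega⟩ + ((2 : ℕ) : ℝ) = 0 := by
      push_cast
      linear_combination (-2) * h1 ⟨j, by omega⟩
    rw [this, Real.rpow_zero]
  have e3 : (∏ i ∈ univ.filter (fun i : Fin n => i.val ≠ j ∧ i.val ≠ j + 1),
      w i ^ ((1 : ℝ) / 2)) *
      (∏ i ∈ univ.filter (fun i : Fin n => i.val ≠ j ∧ i.val ≠ j + 1),
        w i ^ ((σ i * (∑ l ∈ univ.filter (fun i : Fin n => i.val ≠ j ∧ i.val ≠ j + 1), σ l) - 1)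
          / 2)) *
      (∏ i ∈ univ.filter (fun i : Fin n => i.val ≠ j ∧ i.val ≠ j + 1),
        w i ^ (σ i * σ ⟨j, by omega⟩)) = 1 := by
    rw [← Finset.prod_mul_distrib, ← Finset.prod_mul_distrib]
    refine Finset.prod_eq_one fun i hi => ?_
    simp only [mem_filter, mem_univ, true_and] at hi
    have wi := hw i hi.2
    rw [← Real.rpow_add wi, ← Real.rpow_add wi, hT, ← hs]
    ring_nf
    exact Real.rpow_zero _
  rw [Finset.prod_congr rfl e1, Finset.prod_mul_distrib, Finset.prod_mul_distrib]
  generalize (∏ i ∈ univ.filter (fun i : Fin n => i.val ≠ j ∧ i.val ≠ j + 1),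
      w i ^ ((1 : ℝ) / 2)) = A at e3 ⊢
  generalize (∏ i ∈ univ.filter (fun i : Fin n => i.val ≠ j ∧ i.val ≠ j + 1),
      w i ^ (σ i * σ ⟨j, by omega⟩)) = B at e3 ⊢
  generalize (∏ i ∈ univ.filter (fun i : Fin n => i.val ≠ j ∧ i.val ≠ j + 1),
      w ⟨j, by omega⟩ ^ (σ i * σ ⟨j, by omega⟩)) = C at e2 ⊢
  generalize (∏ i ∈ univ.filter (fun i : Fin n => i.val ≠ j ∧ i.val ≠ j + 1),
        w i ^ ((σ i * (∑ l ∈ univ.filter (fun i : Fin n => i.val ≠ j ∧ i.val ≠ j + 1), σ l) - 1)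
          / 2)) = E at e3 ⊢
  generalize (∏ p ∈ univ.filter (fun p : Fin n × Fin n =>
      p.1 < p.2 ∧ p.1.val ≠ j ∧ p.1.val ≠ j + 1 ∧ p.2.val ≠ j ∧ p.2.val ≠ j + 1),
      (x p.2 - x p.1) ^ (σ p.1 * σ p.2 / 2)) = P
  generalize (∏ i ∈ univ.filter (fun i : Fin n => i.val ≠ j ∧ i.val ≠ j + 1),
    |x i - x ⟨j, by omega⟩| ^ (σ i * σ ⟨j, by omega⟩)) = Q
  linear_combination (-P * Q) * e2 * (A * E * B) - P * Q * e3

/-- Covariance of a block with a local minimum at `j`. The hypothesis `hr` expresses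
`w_ξ / w_i = (c x_i + d) / (c ξ + d)`, with `r = c / (c ξ + d)`. -/
lemma Vfuse_covariant {n : ℕ} (σ : Fin n → ℝ) (h1 : ∀ i, σ i * σ i = 1) (hσ : ∑ i, σ i = 0)
    (j : ℕ) (hj : j + 1 < n) (hs : σ ⟨j, by omega⟩ + σ ⟨j + 1, hj⟩ = 0)
    (x y w : Fin n → ℝ) (hw : ∀ i, i.val ≠ j + 1 → 0 < w i)
    (hx : ∀ k l : Fin n, k < l → k.val ≠ j + 1 → l.val ≠ j + 1 → x k < x l)
    (hy : ∀ k l : Fin n, k.val ≠ j + 1 → l.val ≠ j + 1 → y l - y k = w k * w l * (x l - x k))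
    (r : ℝ) (hr : ∀ i : Fin n, i.val ≠ j + 1 →
      w ⟨j, by omega⟩ = w i * (1 + r * (x i - x ⟨j, by omega⟩))) :
    Vfuse σ j hj x =
      (∏ i ∈ univ.filter (fun i : Fin n => i.val ≠ j ∧ i.val ≠ j + 1), w i ^ ((1 : ℝ) / 2)) *
      w ⟨j, by omega⟩ ^ 2 * Vfuse σ j hj y := by
  have hT := sum_unfused σ hσ j hj
  rw [hs, neg_zero] at hT
  have hwj : 0 < w ⟨j, by omega⟩ := hw _ (by simp)
  unfold Vfuse
  rw [prod_pairs_scale σ h1 j x y w hw hx hy]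
  have e1 : w ⟨j, by omega⟩ ^ 2 *
      (∑ i ∈ univ.filter (fun i : Fin n => i.val ≠ j ∧ i.val ≠ j + 1),
        σ i * σ ⟨j, by omega⟩ / (y i - y ⟨j, by omega⟩)) =
      ∑ i ∈ univ.filter (fun i : Fin n => i.val ≠ j ∧ i.val ≠ j + 1),
        σ i * σ ⟨j, by omega⟩ / (x i - x ⟨j, by omega⟩) := by
    have : ∀ i ∈ univ.filter (fun i : Fin n => i.val ≠ j ∧ i.val ≠ j + 1),
        w ⟨j, by omega⟩ ^ 2 * (σ i * σ ⟨j, by omega⟩ / (y i - y ⟨j, by omega⟩)) =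
        σ i * σ ⟨j, by omega⟩ / (x i - x ⟨j, by omega⟩) + σ i * (σ ⟨j, by omega⟩ * r) := by
      intro i hi
      simp only [mem_filter, mem_univ, true_and] at hi
      have wi := hw i hi.2
      have hne : x i - x ⟨j, by omega⟩ ≠ 0 := by
        rcases lt_or_gt_of_ne hi.1 with h | h
        · exact (sub_neg.2 (hx i ⟨j, by omega⟩ h hi.2 (by simp))).ne
        · exact (sub_pos.2 (hx ⟨j, by omega⟩ i h (by simp) hi.2)).ne'
      have hri := hr i hi.2
      rw [hy _ _ (by simp) hi.2]
      generalize w ⟨j, by omega⟩ = wj at *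
      generalize x i - x ⟨j, by omega⟩ = δ at *
      field_simp
      rw [hri]
      ring
    rw [Finset.mul_sum, Finset.sum_congr rfl this, Finset.sum_add_distrib, ← Finset.sum_mul, hT]
    ring
  have e3 : (∏ i ∈ univ.filter (fun i : Fin n => i.val ≠ j ∧ i.val ≠ j + 1),
      w i ^ ((1 : ℝ) / 2)) *
      (∏ i ∈ univ.filter (fun i : Fin n => i.val ≠ j ∧ i.val ≠ j + 1),
        w i ^ ((σ i * (∑ l ∈ univ.filter (fun i : Fin n => i.val ≠ j ∧ i.val ≠ j + 1), σ l) - 1)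
          / 2)) = 1 := by
    rw [← Finset.prod_mul_distrib]
    refine Finset.prod_eq_one fun i hi => ?_
    simp only [mem_filter, mem_univ, true_and] at hi
    have wi := hw i hi.2
    rw [← Real.rpow_add wi, hT]
    ring_nf
    exact Real.rpow_zero _
  rw [← e1]
  generalize (∏ i ∈ univ.filter (fun i : Fin n => i.val ≠ j ∧ i.val ≠ j + 1),
      w i ^ ((1 : ℝ) / 2)) = A at e3 ⊢
  generalize (∏ i ∈ univ.filter (fun i : Fin n => i.val ≠ j ∧ i.val ≠ j + 1),
        w i ^ ((σ i * (∑ l ∈ univ.filter (fun i : Fin n => i.val ≠ j ∧ i.val ≠ j + 1), σ l) - 1)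
          / 2)) = E at e3 ⊢
  generalize (∏ p ∈ univ.filter (fun p : Fin n × Fin n =>
      p.1 < p.2 ∧ p.1.val ≠ j ∧ p.1.val ≠ j + 1 ∧ p.2.val ≠ j ∧ p.2.val ≠ j + 1),
      (x p.2 - x p.1) ^ (σ p.1 * σ p.2 / 2)) = P
  generalize (∑ i ∈ univ.filter (fun i : Fin n => i.val ≠ j ∧ i.val ≠ j + 1),
        σ i * σ ⟨j, by omega⟩ / (y i - y ⟨j, by omega⟩)) = Q
  linear_combination (-P * w ⟨j, by omega⟩ ^ 2 * Q) * e3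

/-! ### Möbius maps -/

lemma mobius_sub {a b c d s t : ℝ} (hs : c * s + d ≠ 0) (ht : c * t + d ≠ 0) :
    (a * t + b) / (c * t + d) - (a * s + b) / (c * s + d) =
      (a * d - b * c) * (t - s) / ((c * s + d) * (c * t + d)) := by
  rw [div_sub_div _ _ ht hs, div_eq_div_iff (mul_ne_zero ht hs) (mul_ne_zero hs ht)]
  ring

/-- Möbius covariance of `Z_{α/⨿_j}` with weights `h = 1/4` at the
unfused points and `H = 1` at the fused point `ξ` (coordinate `j`; coordinate `j+1`
is ignored). -/
theorem Zfuse_mobiusCovariance (N : ℕ) (hN : 1 ≤ N) (α : PlanarPair N)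
    (j : ℕ) (hj : j + 1 < 2 * N)
    (hlink : α.val ⟨j, by omega⟩ ≠ ⟨j + 1, hj⟩)
    (a b c d : ℝ) (habcd : a * d - b * c > 0)
    (x : Fin (2 * N) → ℝ) (hx : x ∈ fusedChamber (2 * N) j)
    (hden : ∀ i : Fin (2 * N), i.val ≠ j + 1 → c * x i + d ≠ 0)
    (hord : ∀ k l : Fin (2 * N), k < l → k.val ≠ j + 1 → l.val ≠ j + 1 →
      (a * x k + b) / (c * x k + d) < (a * x l + b) / (c * x l + d)) :
    Zfuse α j hj x =
      (∏ i ∈ univ.filter (fun i : Fin (2 * N) => i.val ≠ j ∧ i.val ≠ j + 1),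
        ((a * d - b * c) / (c * x i + d) ^ 2) ^ ((1 : ℝ) / 4)) *
      ((a * d - b * c) / (c * x ⟨j, by omega⟩ + d) ^ 2) *
      Zfuse α j hj (fun i => (a * x i + b) / (c * x i + d)) := by
  have hj0 : (⟨j, by omega⟩ : Fin (2 * N)).val ≠ j + 1 := by simp
  -- Preservation of the order forces all denominators to have the same sign.
  have hlt : ∀ k l : Fin (2 * N), k < l → k.val ≠ j + 1 → l.val ≠ j + 1 →
      0 < (c * x k + d) * (c * x l + d) := by
    intro k l hkl hk hl
    have h1 := sub_pos.2 (hord k l hkl hk hl)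
    rw [mobius_sub (hden k hk) (hden l hl)] at h1
    exact (div_pos_iff_of_pos_left (mul_pos habcd (sub_pos.2 (hx k l hkl hk hl)))).1 h1
  have hsame : ∀ k l : Fin (2 * N), k.val ≠ j + 1 → l.val ≠ j + 1 →
      0 < (c * x k + d) * (c * x l + d) := by
    intro k l hk hl
    rcases lt_trichotomy k l with h | h | h
    · exact hlt k l h hk hl
    · subst h
      exact mul_self_pos.2 (hden k hk)
    · rw [mul_comm]
      exact hlt l k h hl hk
  set w : Fin (2 * N) → ℝ := fun i => √(a * d - b * c) / |c * x i + d| with hwdef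
  have hD : 0 < √(a * d - b * c) := Real.sqrt_pos.2 habcd
  have hDsq : √(a * d - b * c) * √(a * d - b * c) = a * d - b * c :=
    Real.mul_self_sqrt habcd.le
  have hw : ∀ i, i.val ≠ j + 1 → 0 < w i := fun i hi => div_pos hD (abs_pos.2 (hden i hi))
  have hwsq : ∀ i, (a * d - b * c) / (c * x i + d) ^ 2 = w i ^ 2 := by
    intro i
    rw [hwdef]
    simp only
    rw [div_pow, sq_abs, Real.sq_sqrt habcd.le]
  have hy : ∀ k l : Fin (2 * N), k.val ≠ j + 1 → l.val ≠ j + 1 →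
      (a * x l + b) / (c * x l + d) - (a * x k + b) / (c * x k + d) =
        w k * w l * (x l - x k) := by
    intro k l hk hl
    rw [mobius_sub (hden k hk) (hden l hl), hwdef]
    simp only
    rw [div_mul_div_comm, hDsq, ← abs_mul, abs_of_pos (hsame k l hk hl)]
    ring
  have hr : ∀ i : Fin (2 * N), i.val ≠ j + 1 → w ⟨j, by omega⟩ =
      w i * (1 + c / (c * x ⟨j, by omega⟩ + d) * (x i - x ⟨j, by omega⟩)) := by
    intro i hi
    have hdj := hden _ hj0
    have e : 1 + c / (c * x ⟨j, by omega⟩ + d) * (x i - x ⟨j, by omega⟩) =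
        |c * x i + d| / |c * x ⟨j, by omega⟩ + d| := by
      have hpos := hsame i _ hi hj0
      rw [← abs_div, abs_of_pos (div_pos_iff.2 (mul_pos_iff.1 hpos))]
      field_simp
      ring
    have hi' := abs_pos.2 (hden i hi)
    rw [e, hwdef]
    simp only
    field_simp
  have hpre : (∏ i ∈ univ.filter (fun i : Fin (2 * N) => i.val ≠ j ∧ i.val ≠ j + 1),
      ((a * d - b * c) / (c * x i + d) ^ 2) ^ ((1 : ℝ) / 4)) =
      ∏ i ∈ univ.filter (fun i : Fin (2 * N) => i.val ≠ j ∧ i.val ≠ j + 1),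
        w i ^ ((1 : ℝ) / 2) := by
    refine Finset.prod_congr rfl fun i hi => ?_
    simp only [mem_filter, mem_univ, true_and] at hi
    rw [hwsq, ← Real.rpow_natCast, ← Real.rpow_mul (hw i hi.2).le]
    norm_num
  rw [hpre, hwsq]
  unfold Zfuse
  rw [mul_add, Finset.mul_sum, Finset.mul_sum]
  congr 1
  · refine Finset.sum_congr rfl fun β hβ => ?_
    simp only [mem_filter, mem_univ, true_and] at hβ
    rw [Vfuse_covariant (pairSign β) (pairSign_mul_self β) (sum_pairSign β) j hj
      (by rw [hβ.1, hβ.2]; norm_num) x (fun i => (a * x i + b) / (c * x i + d)) w hw hx hy _ hr]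
    ring
  · refine Finset.sum_congr rfl fun β hβ => ?_
    simp only [mem_filter, mem_univ, true_and] at hβ
    rw [Ufuse_covariant (pairSign β) (pairSign_mul_self β) (sum_pairSign β) j hj
      hβ x (fun i => (a * x i + b) / (c * x i + d)) w hw hx hy]
    ring
end
end

section
/- Let N ≥ 1 and let σ be the step sequence of a Dyck path of length 2N. Then the fourth power of the conformal block, F(x_1,…,x_{2N}) := U_σ(x_1,…,x_{2N})⁴ = ∏_{1≤i<j≤2N}(x_j−x_i)^{2σ(i)σ(j)}, satisfies, for every j ∈ {1,…,2N} and at every point of the chamber X_{2N}, the third-order PDE (κ=4, H=1): ∂³F/∂x_j³ − 4 Σ_{i≠j} ( (∂F/∂x_j)/(x_i−x_j)² − (∂²F/∂x_i∂x_j)/(x_i−x_j) ) + 2 Σ_{i≠j} ( 2F/(x_i−x_j)³ − (∂F/∂x_i)/(x_i−x_j)² ) = 0. -/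
/-! On the chamber, `F = cblock σ ^ 4` equals `exp (∑ a, ∑ b, σ a * σ b * log (x b - x a))`, so that
`∂ᵢF = F * Aᵢ` with `Aᵢ = ∑ k, 2 σᵢ σₖ / (xᵢ - xₖ)` (`logA`, `hasFDerivAt_pow_four`, `pd_pow_four`). All
the derivatives in the equation are then `F` times polynomials in `Aᵢ` and its derivatives.

Put `uᵢ = 1 / (xᵢ - xⱼ)`. Every term can be written through the power sums `∑ σᵢ uᵢ`, `∑ σᵢ uᵢ²`,
`∑ σᵢ uᵢ³`, `∑ uᵢ²`, `∑ uᵢ³`, except for the double sums `∑ Aᵢ uᵢ` and `∑ Aᵢ uᵢ²`. Symmetrizing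
those in the two summation indices and using `(uᵢ - uₖ) / (xᵢ - xₖ) = - uᵢ uₖ` (and its analogue
for squares) reduces them to power sums as well, since `σᵢ² = 1` (`sum_A_mul_u`,
`sum_A_mul_u_sq`). What remains is a polynomial identity.

Throughout, the convention `0⁻¹ = 0` lets sums run over all indices: the diagonal terms
`(xᵢ - xᵢ)⁻¹` vanish. -/

open Filter Finset
open scoped BigOperators Classical Topology

noncomputable section

/-! ### Logarithmic derivatives -/

/-- The logarithmic derivative `∂ⱼ log F` of the fourth power `F` of the conformal block. The term
`k = j` is zero because `0⁻¹ = 0`. -/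
def logA {n : ℕ} (σ : Fin n → ℝ) (j : Fin n) (x : Fin n → ℝ) : ℝ :=
  ∑ k, 2 * (σ j * σ k) * (x j - x k)⁻¹

/-- The derivative `∂ⱼ² log F`. -/
def logB {n : ℕ} (σ : Fin n → ℝ) (j : Fin n) (x : Fin n → ℝ) : ℝ :=
  ∑ k, -2 * (σ j * σ k) * (x j - x k)⁻¹ ^ 2

/-- The linear form `z ↦ z j - z k`. -/
def diffForm {n : ℕ} (j k : Fin n) : (Fin n → ℝ) →L[ℝ] ℝ :=
  ContinuousLinearMap.proj (R := ℝ) (φ := fun _ : Fin n => ℝ) j -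
    ContinuousLinearMap.proj (R := ℝ) (φ := fun _ : Fin n => ℝ) k

lemma diffForm_single {n : ℕ} (j k i : Fin n) :
    diffForm j k (Pi.single i 1) = (if i = j then 1 else 0) - (if i = k then 1 else 0) := by
  simp [diffForm, Pi.single_apply, eq_comm]

lemma hasFDerivAt_diff {n : ℕ} (j k : Fin n) (x : Fin n → ℝ) :
    HasFDerivAt (fun z : Fin n → ℝ => z j - z k) (diffForm j k) x :=
  (diffForm j k).hasFDerivAt

lemma chamber_ne {n : ℕ} {x : Fin n → ℝ} (hx : x ∈ chamber n) {i j : Fin n} (h : i ≠ j) :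
    x i - x j ≠ 0 := by
  rcases lt_or_gt_of_ne h with h | h
  · exact (sub_neg.2 (hx i j h)).ne
  · exact (sub_pos.2 (hx j i h)).ne'

lemma isOpen_chamber (n : ℕ) : IsOpen (chamber n) := by
  simp only [chamber, Set.ofPred_forall]
  refine isOpen_iInter_of_finite fun i => isOpen_iInter_of_finite fun j =>
    isOpen_iInter_of_finite fun _ => isOpen_lt (continuous_apply i) (continuous_apply j)

/-- Holds for `j = k` as well: the function is then constant and the form is zero. -/
lemma hasFDerivAt_inv_diff {n : ℕ} {x : Fin n → ℝ} (hx : x ∈ chamber n) (j k : Fin n) :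
    HasFDerivAt (fun z : Fin n → ℝ => (z j - z k)⁻¹)
      (-((x j - x k)⁻¹ ^ 2) • diffForm j k) x := by
  by_cases h : j = k
  · subst h
    simpa [diffForm] using hasFDerivAt_const (0 : ℝ) x
  · have := (hasDerivAt_inv (chamber_ne hx h)).comp_hasFDerivAt x (hasFDerivAt_diff j k x)
    rw [inv_pow]
    exact this

/-- Holds for `j = k` as well, by the convention `log 0 = 0`. -/
lemma hasFDerivAt_log_diff {n : ℕ} {x : Fin n → ℝ} (hx : x ∈ chamber n) (j k : Fin n) :
    HasFDerivAt (fun z : Fin n → ℝ => Real.log (z j - z k))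
      ((x j - x k)⁻¹ • diffForm j k) x := by
  by_cases h : j = k
  · subst h
    simpa [diffForm] using hasFDerivAt_const (0 : ℝ) x
  · exact (hasFDerivAt_diff j k x).log (chamber_ne hx h)

lemma hasFDerivAt_logA {n : ℕ} (σ : Fin n → ℝ) {x : Fin n → ℝ} (hx : x ∈ chamber n) (j : Fin n) :
    HasFDerivAt (logA σ j)
      (∑ k, (2 * (σ j * σ k)) • (-((x j - x k)⁻¹ ^ 2) • diffForm j k)) x := by
  unfold logA
  exact HasFDerivAt.fun_sum fun k _ => (hasFDerivAt_inv_diff hx j k).const_mul _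

lemma hasFDerivAt_logB {n : ℕ} (σ : Fin n → ℝ) {x : Fin n → ℝ} (hx : x ∈ chamber n) (j : Fin n) :
    HasFDerivAt (logB σ j)
      (∑ k, (-2 * (σ j * σ k)) •
        ((2 * (x j - x k)⁻¹) • (-((x j - x k)⁻¹ ^ 2) • diffForm j k))) x := by
  unfold logB
  refine HasFDerivAt.fun_sum fun k _ => HasFDerivAt.const_mul ?_ _
  simpa using (hasFDerivAt_inv_diff hx j k).pow 2

/-! ### Partial derivatives of the fourth power -/

/-- Each pair `a < b` occurs twice in the double sum, because `Real.log` is even. -/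
lemma cblock_pow_four_eq_exp {n : ℕ} (σ : Fin n → ℝ) {x : Fin n → ℝ} (hx : x ∈ chamber n) :
    cblock σ x ^ 4 = Real.exp (∑ a, ∑ b, σ a * σ b * Real.log (x b - x a)) := by
  have h1 : cblock σ x = Real.exp (∑ p ∈ univ.filter (fun p : Fin n × Fin n => p.1 < p.2),
      σ p.1 * σ p.2 / 2 * Real.log (x p.2 - x p.1)) := by
    rw [Real.exp_sum]
    refine Finset.prod_congr rfl fun p hp => ?_
    rw [Real.rpow_def_of_pos (sub_pos.2 (hx _ _ (by simpa using hp))), mul_comm]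
  rw [h1, ← Real.exp_nat_mul]
  congr 1
  have h2 : ∑ a, ∑ b, σ a * σ b * Real.log (x b - x a) =
      ∑ a, ∑ b, ((if a < b then σ a * σ b * Real.log (x b - x a) else 0) +
        (if b < a then σ b * σ a * Real.log (x a - x b) else 0)) := by
    refine Finset.sum_congr rfl fun a _ => Finset.sum_congr rfl fun b _ => ?_
    rcases lt_trichotomy a b with h | h | h
    · simp [h, h.not_gt]
    · simp [h]
    · rw [← Real.log_neg_eq_log, neg_sub]
      simp [h, h.not_gt, mul_comm (σ a)]
  have h3 : ∑ a, ∑ b, (if b < a then σ b * σ a * Real.log (x a - x b) else 0) =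
      ∑ a, ∑ b, (if a < b then σ a * σ b * Real.log (x b - x a) else 0) := Finset.sum_comm
  rw [h2]
  simp only [Finset.sum_add_distrib]
  rw [h3, Finset.sum_filter, Fintype.sum_prod_type, ← two_mul, Finset.mul_sum, Finset.mul_sum]
  refine Finset.sum_congr rfl fun a _ => ?_
  rw [Finset.mul_sum, Finset.mul_sum]
  refine Finset.sum_congr rfl fun b _ => ?_
  split_ifs
  · push_cast; ring
  · simp

lemma hasFDerivAt_pow_four {n : ℕ} (σ : Fin n → ℝ) {x : Fin n → ℝ} (hx : x ∈ chamber n) :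
    HasFDerivAt (fun z => cblock σ z ^ 4)
      ((cblock σ x ^ 4) •
        ∑ a, ∑ b, (σ a * σ b) • ((x b - x a)⁻¹ • diffForm b a)) x := by
  have h : HasFDerivAt (fun z : Fin n → ℝ => ∑ a, ∑ b, σ a * σ b * Real.log (z b - z a))
      (∑ a, ∑ b, (σ a * σ b) • ((x b - x a)⁻¹ • diffForm b a)) x :=
    HasFDerivAt.fun_sum fun a _ => HasFDerivAt.fun_sum fun b _ =>
      (hasFDerivAt_log_diff hx b a).const_mul _
  rw [cblock_pow_four_eq_exp σ hx]
  refine h.exp.congr_of_eventuallyEq ?_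
  filter_upwards [(isOpen_chamber n).mem_nhds hx] with z hz
  exact cblock_pow_four_eq_exp σ hz

lemma pd_pow_four {n : ℕ} (σ : Fin n → ℝ) {x : Fin n → ℝ} (hx : x ∈ chamber n) (i : Fin n) :
    pd i (fun z => cblock σ z ^ 4) x = cblock σ x ^ 4 * logA σ i x := by
  rw [pd, (hasFDerivAt_pow_four σ hx).fderiv]
  simp only [_root_.smul_apply, _root_.sum_apply, smul_eq_mul,
    diffForm_single, mul_sub, Finset.sum_sub_distrib, mul_ite, mul_one, mul_zero,
    Finset.sum_ite_eq, Finset.mem_univ, if_true]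
  rw [← mul_sub]
  congr 1
  rw [Finset.sum_comm (f := fun a b => if i = a then σ a * σ b * (x b - x a)⁻¹ else 0)]
  simp only [Finset.sum_ite_eq, Finset.mem_univ, if_true]
  rw [← Finset.sum_sub_distrib, logA]
  refine Finset.sum_congr rfl fun k _ => ?_
  rw [← neg_sub (x i) (x k), inv_neg]
  ring

lemma pd_logA_self {n : ℕ} (σ : Fin n → ℝ) {x : Fin n → ℝ} (hx : x ∈ chamber n) (j : Fin n) :
    pd j (logA σ j) x = logB σ j x := by
  rw [pd, (hasFDerivAt_logA σ hx j).fderiv]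
  simp only [_root_.smul_apply, _root_.sum_apply, smul_eq_mul,
    diffForm_single, logB]
  refine Finset.sum_congr rfl fun k _ => ?_
  by_cases h : j = k
  · simp [h]
  · simp [h]

lemma pd_logA_ne {n : ℕ} (σ : Fin n → ℝ) {x : Fin n → ℝ} (hx : x ∈ chamber n) {i j : Fin n}
    (h : i ≠ j) : pd i (logA σ j) x = 2 * (σ j * σ i) * (x i - x j)⁻¹ ^ 2 := by
  rw [pd, (hasFDerivAt_logA σ hx j).fderiv]
  simp only [_root_.smul_apply, _root_.sum_apply, smul_eq_mul,
    diffForm_single, h, if_false, zero_sub]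
  rw [Finset.sum_eq_single i (fun k _ hk => by simp [hk.symm]) (by simp), if_pos rfl,
    ← neg_sub (x i) (x j), inv_neg]
  ring

lemma pd_logB_self {n : ℕ} (σ : Fin n → ℝ) {x : Fin n → ℝ} (hx : x ∈ chamber n) (j : Fin n) :
    pd j (logB σ j) x = ∑ k, 4 * (σ j * σ k) * (x j - x k)⁻¹ ^ 3 := by
  rw [pd, (hasFDerivAt_logB σ hx j).fderiv]
  simp only [_root_.smul_apply, _root_.sum_apply, smul_eq_mul,
    diffForm_single]
  refine Finset.sum_congr rfl fun k _ => ?_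
  by_cases h : j = k
  · simp [h]
  · simp [-inv_pow, h]; ring

lemma pd_congr {n : ℕ} {f g : (Fin n → ℝ) → ℝ} (h : ∀ z ∈ chamber n, f z = g z)
    {x : Fin n → ℝ} (hx : x ∈ chamber n) (i : Fin n) : pd i f x = pd i g x := by
  have : f =ᶠ[𝓝 x] g := by
    filter_upwards [(isOpen_chamber n).mem_nhds hx] with z hz using h z hz
  rw [pd, pd, this.fderiv_eq]

lemma pd_mul {n : ℕ} {f g : (Fin n → ℝ) → ℝ} {x : Fin n → ℝ}
    (hf : DifferentiableAt ℝ f x) (hg : DifferentiableAt ℝ g x) (i : Fin n) :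
    pd i (fun z => f z * g z) x = pd i f x * g x + f x * pd i g x := by
  rw [pd, fderiv_fun_mul hf hg]
  simp [pd]
  ring

lemma pd_pd_pow_four {n : ℕ} (σ : Fin n → ℝ) {x : Fin n → ℝ} (hx : x ∈ chamber n)
    (i j : Fin n) :
    pd i (pd j (fun z => cblock σ z ^ 4)) x =
      cblock σ x ^ 4 * (logA σ i x * logA σ j x + pd i (logA σ j) x) := by
  rw [pd_congr (fun z hz => pd_pow_four σ hz j) hx,
    pd_mul (hasFDerivAt_pow_four σ hx).differentiableAt (hasFDerivAt_logA σ hx j).differentiableAt,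
    pd_pow_four σ hx]
  ring

lemma pd_pd_pd_pow_four {n : ℕ} (σ : Fin n → ℝ) {x : Fin n → ℝ} (hx : x ∈ chamber n)
    (j : Fin n) :
    pd j (pd j (pd j (fun z => cblock σ z ^ 4))) x =
      cblock σ x ^ 4 * (logA σ j x ^ 3 + 3 * logA σ j x * logB σ j x +
        ∑ k, 4 * (σ j * σ k) * (x j - x k)⁻¹ ^ 3) := by
  have h : ∀ z ∈ chamber n, pd j (pd j (fun z => cblock σ z ^ 4)) z =
      cblock σ z ^ 4 * (logA σ j z * logA σ j z + logB σ j z) := fun z hz => by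
    rw [pd_pd_pow_four σ hz, pd_logA_self σ hz]
  have hF := (hasFDerivAt_pow_four σ hx).differentiableAt
  have hA := (hasFDerivAt_logA σ hx j).differentiableAt
  have hB := (hasFDerivAt_logB σ hx j).differentiableAt
  have hadd : pd j (fun z => logA σ j z * logA σ j z + logB σ j z) x =
      pd j (fun z => logA σ j z * logA σ j z) x + pd j (logB σ j) x := by
    rw [pd, fderiv_fun_add (hA.fun_mul hA) hB]
    rfl
  rw [pd_congr h hx, pd_mul hF ((hA.fun_mul hA).fun_add hB), hadd, pd_mul hA hA,
    pd_pow_four σ hx, pd_logA_self σ hx, pd_logB_self σ hx]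
  ring

/-! ### Reduction of the double sums to power sums -/

/-- Symmetrization of a double sum against the antisymmetric kernel `(xᵢ - xₖ)⁻¹`. -/
lemma sum_logA_mul {n : ℕ} (σ x v : Fin n → ℝ) :
    ∑ i, logA σ i x * v i = ∑ i, ∑ k, σ i * σ k * ((v i - v k) * (x i - x k)⁻¹) := by
  have h : ∑ i, ∑ k, σ i * σ k * (v k * (x i - x k)⁻¹) =
      -∑ i, ∑ k, σ i * σ k * (v i * (x i - x k)⁻¹) := by
    rw [Finset.sum_comm, ← Finset.sum_neg_distrib]
    refine Finset.sum_congr rfl fun i _ => ?_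
    rw [← Finset.sum_neg_distrib]
    refine Finset.sum_congr rfl fun k _ => ?_
    rw [← neg_sub (x i) (x k), inv_neg]
    ring
  simp only [sub_mul, mul_sub, Finset.sum_sub_distrib]
  rw [h, sub_neg_eq_add, ← two_mul, Finset.mul_sum]
  refine Finset.sum_congr rfl fun i _ => ?_
  rw [logA, Finset.sum_mul, Finset.mul_sum]
  refine Finset.sum_congr rfl fun k _ => ?_
  ring

/-- The identity `(uᵢ - uₖ) / (xᵢ - xₖ) = - uᵢ uₖ`; the Kronecker deltas correct for the junk
value `0⁻¹ = 0` when two of the indices coincide. -/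
lemma divided_diff_inv {n : ℕ} {x : Fin n → ℝ} (hx : x ∈ chamber n) (i j k : Fin n) :
    ((x i - x j)⁻¹ - (x k - x j)⁻¹) * (x i - x k)⁻¹ =
      -((x i - x j)⁻¹ * (x k - x j)⁻¹) + (if i = k then (x i - x j)⁻¹ ^ 2 else 0) +
      (if i = j then (x k - x j)⁻¹ ^ 2 else 0) + (if k = j then (x i - x j)⁻¹ ^ 2 else 0) := by
  by_cases hij : i = j
  · subst hij
    by_cases hik : i = k
    · subst hik; simp
    · rw [← neg_sub (x i) (x k), inv_neg]; simp [-inv_pow, hik, Ne.symm hik]; ring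
  · by_cases hkj : k = j
    · subst hkj; simp [-inv_pow, hij]; ring
    · by_cases hik : i = k
      · subst hik; simp [-inv_pow, hij]; ring
      · have h1 := chamber_ne hx hij
        have h2 := chamber_ne hx hkj
        have h3 := chamber_ne hx hik
        simp only [hij, hkj, hik, if_false]
        field_simp
        ring

/-- The analogue of `divided_diff_inv` for squares. -/
lemma divided_diff_inv_sq {n : ℕ} {x : Fin n → ℝ} (hx : x ∈ chamber n) (i j k : Fin n) :
    ((x i - x j)⁻¹ ^ 2 - (x k - x j)⁻¹ ^ 2) * (x i - x k)⁻¹ =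
      -((x i - x j)⁻¹ ^ 2 * (x k - x j)⁻¹) - (x i - x j)⁻¹ * (x k - x j)⁻¹ ^ 2 +
      (if i = k then 2 * (x i - x j)⁻¹ ^ 3 else 0) +
      (if i = j then (x k - x j)⁻¹ ^ 3 else 0) + (if k = j then (x i - x j)⁻¹ ^ 3 else 0) := by
  have h := divided_diff_inv hx i j k
  have e : ((x i - x j)⁻¹ ^ 2 - (x k - x j)⁻¹ ^ 2) * (x i - x k)⁻¹ =
      ((x i - x j)⁻¹ + (x k - x j)⁻¹) * (((x i - x j)⁻¹ - (x k - x j)⁻¹) * (x i - x k)⁻¹) := by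
    ring
  rw [e, h]
  by_cases hij : i = j
  · subst hij
    by_cases hik : i = k
    · subst hik; simp
    · simp [-inv_pow, hik, Ne.symm hik]; ring
  · by_cases hkj : k = j
    · subst hkj; simp [-inv_pow, hij]; ring
    · by_cases hik : i = k
      · subst hik; simp [-inv_pow, hij]; ring
      · simp [-inv_pow, hij, hkj, hik]; ring

lemma sum_A_mul_u {n : ℕ} {σ : Fin n → ℝ} (hσ : ∀ i, σ i * σ i = 1) {x : Fin n → ℝ}
    (hx : x ∈ chamber n) (j : Fin n) :
    ∑ i, logA σ i x * (x i - x j)⁻¹ =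
      -(∑ i, σ i * (x i - x j)⁻¹) ^ 2 + ∑ i, (x i - x j)⁻¹ ^ 2 +
        2 * σ j * ∑ i, σ i * (x i - x j)⁻¹ ^ 2 := by
  rw [sum_logA_mul σ x (fun i => (x i - x j)⁻¹)]
  simp only [divided_diff_inv hx, mul_add, Finset.sum_add_distrib, mul_ite, mul_zero,
    Finset.sum_ite_eq, Finset.sum_ite_eq', Finset.mem_univ, if_true, hσ, one_mul]
  rw [Finset.sum_comm (f := fun i k => if i = j then σ i * σ k * (x k - x j)⁻¹ ^ 2 else 0)]
  simp only [Finset.sum_ite_eq', Finset.mem_univ, if_true]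
  have e1 : ∑ i, ∑ k, σ i * σ k * -((x i - x j)⁻¹ * (x k - x j)⁻¹) =
      -(∑ i, σ i * (x i - x j)⁻¹) ^ 2 := by
    rw [sq, Finset.sum_mul_sum, ← Finset.sum_neg_distrib]
    refine Finset.sum_congr rfl fun i _ => ?_
    rw [← Finset.sum_neg_distrib]
    exact Finset.sum_congr rfl fun k _ => by ring
  have e2 : ∑ k, σ j * σ k * (x k - x j)⁻¹ ^ 2 = σ j * ∑ i, σ i * (x i - x j)⁻¹ ^ 2 := by
    rw [Finset.mul_sum]
    exact Finset.sum_congr rfl fun k _ => by ring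
  have e3 : ∑ k, σ k * σ j * (x k - x j)⁻¹ ^ 2 = σ j * ∑ i, σ i * (x i - x j)⁻¹ ^ 2 := by
    rw [Finset.mul_sum]
    exact Finset.sum_congr rfl fun k _ => by ring
  rw [e1, e2, e3]
  ring

lemma sum_A_mul_u_sq {n : ℕ} {σ : Fin n → ℝ} (hσ : ∀ i, σ i * σ i = 1) {x : Fin n → ℝ}
    (hx : x ∈ chamber n) (j : Fin n) :
    ∑ i, logA σ i x * (x i - x j)⁻¹ ^ 2 =
      -2 * ((∑ i, σ i * (x i - x j)⁻¹ ^ 2) * ∑ i, σ i * (x i - x j)⁻¹) +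
        2 * ∑ i, (x i - x j)⁻¹ ^ 3 + 2 * σ j * ∑ i, σ i * (x i - x j)⁻¹ ^ 3 := by
  rw [sum_logA_mul σ x (fun i => (x i - x j)⁻¹ ^ 2)]
  simp only [divided_diff_inv_sq hx, mul_add, mul_sub, Finset.sum_sub_distrib,
    Finset.sum_add_distrib, mul_ite, mul_zero,
    Finset.sum_ite_eq, Finset.sum_ite_eq', Finset.mem_univ, if_true, hσ, one_mul]
  rw [Finset.sum_comm (f := fun i k => if i = j then σ i * σ k * (x k - x j)⁻¹ ^ 3 else 0)]
  simp only [Finset.sum_ite_eq', Finset.mem_univ, if_true]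
  have e1 : ∑ i, ∑ k, σ i * σ k * -((x i - x j)⁻¹ ^ 2 * (x k - x j)⁻¹) =
      -((∑ i, σ i * (x i - x j)⁻¹ ^ 2) * ∑ i, σ i * (x i - x j)⁻¹) := by
    rw [Finset.sum_mul_sum, ← Finset.sum_neg_distrib]
    refine Finset.sum_congr rfl fun i _ => ?_
    rw [← Finset.sum_neg_distrib]
    exact Finset.sum_congr rfl fun k _ => by ring
  have e2 : ∑ i, ∑ k, σ i * σ k * ((x i - x j)⁻¹ * (x k - x j)⁻¹ ^ 2) =
      (∑ i, σ i * (x i - x j)⁻¹) * ∑ i, σ i * (x i - x j)⁻¹ ^ 2 := by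
    rw [Finset.sum_mul_sum]
    exact Finset.sum_congr rfl fun i _ => Finset.sum_congr rfl fun k _ => by ring
  have e3 : ∑ k, σ j * σ k * (x k - x j)⁻¹ ^ 3 = σ j * ∑ i, σ i * (x i - x j)⁻¹ ^ 3 := by
    rw [Finset.mul_sum]
    exact Finset.sum_congr rfl fun k _ => by ring
  have e4 : ∑ k, σ k * σ j * (x k - x j)⁻¹ ^ 3 = σ j * ∑ i, σ i * (x i - x j)⁻¹ ^ 3 := by
    rw [Finset.mul_sum]
    exact Finset.sum_congr rfl fun k _ => by ring
  rw [e1, e2, e3, e4, ← Finset.mul_sum]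
  ring

/-- The fourth power of a conformal block of a Dyck path satisfies
the third-order PDE system (κ = 4, H = 1). -/
theorem cblock_pow_four_thirdOrderPDE (N : ℕ) (hN : 1 ≤ N)
    (σ : Fin (2 * N) → ℝ) (hσ : IsDyck σ) :
    ∀ j : Fin (2 * N), ∀ x ∈ chamber (2 * N),
      pd j (pd j (pd j (fun z => cblock σ z ^ 4))) x
        - 4 * ∑ i ∈ univ.filter (fun i : Fin (2 * N) => i ≠ j),
            (pd j (fun z => cblock σ z ^ 4) x / (x i - x j) ^ 2 -
              pd i (pd j (fun z => cblock σ z ^ 4)) x / (x i - x j))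
        + 2 * ∑ i ∈ univ.filter (fun i : Fin (2 * N) => i ≠ j),
            (2 * cblock σ x ^ 4 / (x i - x j) ^ 3 -
              pd i (fun z => cblock σ z ^ 4) x / (x i - x j) ^ 2) = 0 := by
  intro j x hx
  have hs : ∀ i, σ i * σ i = 1 := fun i => by
    rcases hσ.1 i with h | h <;> rw [h] <;> norm_num
  have hA : logA σ j x = -2 * σ j * ∑ i, σ i * (x i - x j)⁻¹ := by
    rw [logA, Finset.mul_sum]
    refine Finset.sum_congr rfl fun k _ => ?_
    rw [← neg_sub (x k) (x j), inv_neg]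
    ring
  have hB : logB σ j x = -2 * σ j * ∑ i, σ i * (x i - x j)⁻¹ ^ 2 := by
    rw [logB, Finset.mul_sum]
    refine Finset.sum_congr rfl fun k _ => ?_
    rw [← neg_sub (x k) (x j), inv_neg]
    ring
  have hC : ∑ k, 4 * (σ j * σ k) * (x j - x k)⁻¹ ^ 3 =
      -4 * σ j * ∑ i, σ i * (x i - x j)⁻¹ ^ 3 := by
    rw [Finset.mul_sum]
    refine Finset.sum_congr rfl fun k _ => ?_
    rw [← neg_sub (x k) (x j), inv_neg]
    ring
  -- The terms `i = j` vanish because of the division by zero, so the sums extend to all indices.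
  have S1 : ∑ i ∈ univ.filter (fun i : Fin (2 * N) => i ≠ j),
      (pd j (fun z => cblock σ z ^ 4) x / (x i - x j) ^ 2 -
        pd i (pd j (fun z => cblock σ z ^ 4)) x / (x i - x j)) =
      cblock σ x ^ 4 * (logA σ j x * ∑ i, (x i - x j)⁻¹ ^ 2 -
        logA σ j x * ∑ i, logA σ i x * (x i - x j)⁻¹ -
        2 * σ j * ∑ i, σ i * (x i - x j)⁻¹ ^ 3) := by
    simp only [Finset.mul_sum, ← Finset.sum_sub_distrib]
    rw [Finset.sum_filter]
    refine Finset.sum_congr rfl fun i _ => ?_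
    by_cases h : i = j
    · simp [h]
    · rw [if_pos h, pd_pow_four σ hx, pd_pd_pow_four σ hx, pd_logA_ne σ hx h]
      simp only [div_eq_mul_inv, ← inv_pow]
      ring
  have S2 : ∑ i ∈ univ.filter (fun i : Fin (2 * N) => i ≠ j),
      (2 * cblock σ x ^ 4 / (x i - x j) ^ 3 -
        pd i (fun z => cblock σ z ^ 4) x / (x i - x j) ^ 2) =
      cblock σ x ^ 4 * (2 * ∑ i, (x i - x j)⁻¹ ^ 3 -
        ∑ i, logA σ i x * (x i - x j)⁻¹ ^ 2) := by
    simp only [Finset.mul_sum, ← Finset.sum_sub_distrib]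
    rw [Finset.sum_filter]
    refine Finset.sum_congr rfl fun i _ => ?_
    by_cases h : i = j
    · simp [h]
    · rw [if_pos h, pd_pow_four σ hx]
      simp only [div_eq_mul_inv, ← inv_pow]
      ring
  rw [S1, S2, pd_pd_pd_pow_four σ hx, sum_A_mul_u hs hx, sum_A_mul_u_sq hs hx, hA, hB, hC]
  generalize ∑ i, σ i * (x i - x j)⁻¹ = P
  generalize ∑ i, σ i * (x i - x j)⁻¹ ^ 2 = Q
  generalize ∑ i, σ i * (x i - x j)⁻¹ ^ 3 = R
  generalize ∑ i, (x i - x j)⁻¹ ^ 2 = T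
  generalize ∑ i, (x i - x j)⁻¹ ^ 3 = V
  -- Both signs of `σ j` give a polynomial identity in the power sums.
  rcases hσ.1 j with h | h <;> rw [h] <;> ring
end
end

section
/- Let N ≥ 1 and let σ be the step sequence of a Dyck path of length 2N with a local minimum at j (σ(j)=−1, σ(j+1)=+1), for some j ∈ {1,…,2N−1}. Let σ' be obtained from σ by exchanging the values at j and j+1 (so σ'(j)=+1, σ'(j+1)=−1, and σ'=σ elsewhere); σ' is again a Dyck step sequence. Fix x_1<⋯<x_{j−1}<ξ<x_{j+2}<⋯<x_{2N}. Then, as (x̃_1,…,x̃_{2N}) ranges over the chamber X_{2N} with x̃_j → ξ, x̃_{j+1} → ξ and x̃_i → x_i for every i ∉ {j,j+1}, the quotient (U_σ(x̃) − U_{σ'}(x̃)) / (x̃_{j+1}−x̃_j)^{1/2} converges to V_{σ/∨_j}(x_1,…,x_{j−1},ξ,x_{j+2},…,x_{2N}) = ∏_{t<s, t,s∉{j,j+1}} (x_s−x_t)^{σ(t)σ(s)/2} · Σ_{i∉{j,j+1}} σ(i)σ(j)/(x_i−ξ). -/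
/-!
On the chamber, a block with opposite signs at the adjacent points `a = j` and `b = j + 1` factors
as `P * exp (± L) * δ ^ (-1/2)`, where `δ = x b - x a`, `P` is the block of the remaining points and
`L = ∑ i, σ i / 2 * (log |x b - x i| - log |x a - x i|)`; exchanging the two signs replaces `L` by
`-L` (`cblock_eq_of_extremum`). The quotient in question is therefore `P * (exp L - exp (-L)) / δ`.
Strict differentiability of `log` away from `0` gives the limit of `L / δ`, namely
`∑ i, σ i / 2 / (ξ - x i)`, and strict differentiability of `t ↦ exp t - exp (-t)` at `0`, with
derivative `2`, gives the limit of the quotient (`tendsto_sub_div_of_hasStrictDerivAt` in both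
cases). Strictness is what allows both fusing points to move at once.
-/

open Filter Finset
open scoped BigOperators Classical Topology

noncomputable section

/-- Splitting a product over pairs `p.1 < p.2` according to how many of the two entries lie in
`{j, j + 1}`: since `j` and `j + 1` are adjacent, any other index `i` is below both or above both. -/
lemma prod_pairs_split {n : ℕ} (j : ℕ) (hj : j + 1 < n) (F : Fin n → Fin n → ℝ) :
    ∏ p ∈ univ.filter (fun p : Fin n × Fin n => p.1 < p.2), F p.1 p.2 =
      (∏ p ∈ univ.filter (fun p : Fin n × Fin n =>
        p.1 < p.2 ∧ p.1.val ≠ j ∧ p.1.val ≠ j + 1 ∧ p.2.val ≠ j ∧ p.2.val ≠ j + 1),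
          F p.1 p.2) *
      ((∏ i ∈ univ.filter (fun i : Fin n => i.val ≠ j ∧ i.val ≠ j + 1),
        (if i.val < j then F i ⟨j, by omega⟩ * F i ⟨j + 1, hj⟩
          else F ⟨j, by omega⟩ i * F ⟨j + 1, hj⟩ i)) *
        F ⟨j, by omega⟩ ⟨j + 1, hj⟩) := by
  set a : Fin n := ⟨j, by omega⟩ with ha
  set b : Fin n := ⟨j + 1, hj⟩ with hb
  set S := univ.filter (fun i : Fin n => i.val ≠ j ∧ i.val ≠ j + 1) with hS
  have haS : a ∉ insert b S := by simp [hS, ha, hb]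
  have hbS : b ∉ S := by simp [hS, hb]
  have huniv : (univ : Finset (Fin n)) = insert a (insert b S) := by
    ext i
    simp only [hS, ha, hb, mem_univ, mem_insert, mem_filter, Fin.ext_iff, true_and, true_iff]
    omega
  have hL : ∏ p ∈ univ.filter (fun p : Fin n × Fin n => p.1 < p.2), F p.1 p.2 =
      ∏ i, ∏ k, if i < k then F i k else 1 := by
    rw [prod_filter, ← univ_product_univ, prod_product]
  have hR : ∏ p ∈ univ.filter (fun p : Fin n × Fin n =>
        p.1 < p.2 ∧ p.1.val ≠ j ∧ p.1.val ≠ j + 1 ∧ p.2.val ≠ j ∧ p.2.val ≠ j + 1),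
          F p.1 p.2 = ∏ i ∈ S, ∏ k ∈ S, if i < k then F i k else 1 := by
    rw [← prod_product (f := fun p : Fin n × Fin n => if p.1 < p.2 then F p.1 p.2 else 1),
      ← prod_filter]
    refine prod_congr ?_ fun _ _ => rfl
    ext p
    simp only [hS, mem_filter, mem_product, mem_univ, true_and]
    tauto
  have hab : a < b := by simp [ha, hb]
  have hmid : ∏ i ∈ S, (if i.val < j then F i a * F i b else F a i * F b i) =
      (∏ i ∈ S, (if a < i then F a i else 1)) * (∏ i ∈ S, (if b < i then F b i else 1)) *
      (∏ i ∈ S, (if i < a then F i a else 1)) * (∏ i ∈ S, (if i < b then F i b else 1)) := by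
    rw [← prod_mul_distrib, ← prod_mul_distrib, ← prod_mul_distrib]
    refine prod_congr rfl fun i hi => ?_
    simp only [hS, mem_filter, mem_univ, true_and] at hi
    simp only [ha, hb, Fin.lt_def]
    by_cases h : i.val < j
    · rw [if_pos h, if_neg (by omega), if_neg (by omega), if_pos h, if_pos (by omega)]
      ring
    · rw [if_neg h, if_pos (by omega), if_pos (by omega), if_neg h, if_neg (by omega)]
      ring
  rw [hL, hR, hmid, huniv]
  simp only [prod_insert haS, prod_insert hbS, prod_mul_distrib, lt_irrefl, if_false, hab,
    if_true, hab.not_gt]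
  ring

/-- Chain rule for difference quotients with two moving points; unlike the usual slope statement it
allows `a = b`, the increments being measured against a separate scale `δ`. -/
lemma tendsto_sub_div_of_hasStrictDerivAt {α : Type*} {l : Filter α} {f : ℝ → ℝ} {f' c d : ℝ}
    {a b δ : α → ℝ} (hf : HasStrictDerivAt f f' c) (ha : Tendsto a l (𝓝 c))
    (hb : Tendsto b l (𝓝 c)) (hδ : ∀ᶠ x in l, δ x ≠ 0)
    (hd : Tendsto (fun x => (a x - b x) / δ x) l (𝓝 d)) :
    Tendsto (fun x => (f (a x) - f (b x)) / δ x) l (𝓝 (f' * d)) := by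
  have hO : (fun x => a x - b x) =O[l] δ :=
    Asymptotics.isBigO_of_div_tendsto_nhds (hδ.mono fun x hx h => absurd h hx) d hd
  have ho : (fun x => f (a x) - f (b x) - (a x - b x) * f') =o[l] δ := by
    have h := (hf.isLittleO.comp_tendsto (ha.prodMk_nhds hb)).trans_isBigO hO
    simpa [Function.comp_def] using h
  have h := ho.tendsto_div_nhds_zero.add (hd.const_mul f')
  rw [zero_add] at h
  refine h.congr' (Eventually.of_forall fun x => ?_)
  ring

/-- The part of `cblock` not involving the indices `j` and `j + 1`. -/
def outerBlock {n : ℕ} (σ : Fin n → ℝ) (j : ℕ) (x : Fin n → ℝ) : ℝ :=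
  ∏ p ∈ univ.filter (fun p : Fin n × Fin n =>
      p.1 < p.2 ∧ p.1.val ≠ j ∧ p.1.val ≠ j + 1 ∧ p.2.val ≠ j ∧ p.2.val ≠ j + 1),
    (x p.2 - x p.1) ^ (σ p.1 * σ p.2 / 2)

/-- The logarithm of the interaction of the points `j`, `j + 1`, carrying opposite signs, with all
other points. `Real.log` is even, so no absolute values are needed. -/
def logRatio {n : ℕ} (σ : Fin n → ℝ) (j : ℕ) (hj : j + 1 < n) (x : Fin n → ℝ) : ℝ :=
  ∑ i ∈ univ.filter (fun i : Fin n => i.val ≠ j ∧ i.val ≠ j + 1),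
    σ i / 2 * (Real.log (x ⟨j + 1, hj⟩ - x i) - Real.log (x ⟨j, by omega⟩ - x i))

/-- The factorization of a conformal block at a local extremum with `σ j = -ε`, `σ (j + 1) = ε`. -/
lemma cblock_eq_of_extremum {n : ℕ} (σ : Fin n → ℝ) (j : ℕ) (hj : j + 1 < n) (ε : ℝ)
    (hε : ε * ε = 1) (h0 : σ ⟨j, by omega⟩ = -ε) (h1 : σ ⟨j + 1, hj⟩ = ε)
    (x : Fin n → ℝ) (hx : x ∈ chamber n) :
    cblock σ x = outerBlock σ j x * (Real.exp (ε * logRatio σ j hj x) *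
      (x ⟨j + 1, hj⟩ - x ⟨j, by omega⟩) ^ (-(1 : ℝ) / 2)) := by
  have hx' : ∀ i k : Fin n, i < k → 0 < x k - x i := fun i k h => sub_pos.2 (hx i k h)
  unfold cblock
  rw [prod_pairs_split j hj (fun i k => (x k - x i) ^ (σ i * σ k / 2)), ← outerBlock]
  congr 2
  · rw [logRatio, mul_sum, Real.exp_sum]
    refine prod_congr rfl fun i hi => ?_
    simp only [mem_filter, mem_univ, true_and] at hi
    rw [h0, h1]
    by_cases h : i.val < j
    · rw [if_pos h, Real.rpow_def_of_pos (hx' _ _ (by simpa [Fin.lt_def] using h)),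
        Real.rpow_def_of_pos (hx' _ _ (by simp only [Fin.lt_def]; omega)), ← Real.exp_add]
      ring_nf
    · rw [if_neg h, Real.rpow_def_of_pos (hx' _ _ (by simp only [Fin.lt_def]; omega)),
        Real.rpow_def_of_pos (hx' _ _ (by simp only [Fin.lt_def]; omega)), ← Real.exp_add,
        ← Real.log_neg_eq_log (x i - _), ← Real.log_neg_eq_log (x i - _), neg_sub, neg_sub]
      ring_nf
  · rw [h0, h1, neg_mul, hε]

/-- Fusion at a local minimum `j` (σ(j) = -1, σ(j+1) = +1): the
normalized limit of the difference `U_σ - U_{σ'}` (where `σ'` exchanges the two steps)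
exists and equals `V_{σ/∨_j}`. -/
theorem cblock_fusion_localMin (N : ℕ) (hN : 1 ≤ N)
    (σ : Fin (2 * N) → ℝ) (hσ : IsDyck σ)
    (j : ℕ) (hj : j + 1 < 2 * N)
    (hmin : σ ⟨j, by omega⟩ = -1 ∧ σ ⟨j + 1, hj⟩ = 1)
    (x₀ : Fin (2 * N) → ℝ) (hx₀ : x₀ ∈ fusedChamber (2 * N) j)
    (hfuse : x₀ ⟨j + 1, hj⟩ = x₀ ⟨j, by omega⟩) :
    Tendsto
      (fun x : Fin (2 * N) → ℝ =>
        (cblock σ x -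
            cblock (fun i => if i.val = j then 1 else if i.val = j + 1 then -1 else σ i) x) /
          (x ⟨j + 1, hj⟩ - x ⟨j, by omega⟩) ^ ((1 : ℝ) / 2))
      (𝓝[chamber (2 * N)] x₀) (𝓝 (Vfuse σ j hj x₀)) := by
  obtain ⟨h0, h1⟩ := hmin
  set τ : Fin (2 * N) → ℝ :=
    fun i => if i.val = j then 1 else if i.val = j + 1 then -1 else σ i with hτ
  have hτσ : ∀ i : Fin (2 * N), i.val ≠ j → i.val ≠ j + 1 → τ i = σ i := by
    intro i h h'
    simp [hτ, h, h']
  have houter : ∀ x, outerBlock τ j x = outerBlock σ j x := by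
    intro x
    refine prod_congr rfl fun p hp => ?_
    simp only [mem_filter, mem_univ, true_and] at hp
    rw [hτσ _ hp.2.1 hp.2.2.1, hτσ _ hp.2.2.2.1 hp.2.2.2.2]
  have hratio : ∀ x, logRatio τ j hj x = logRatio σ j hj x := by
    intro x
    refine sum_congr rfl fun i hi => ?_
    simp only [mem_filter, mem_univ, true_and] at hi
    rw [hτσ _ hi.1 hi.2]
  set a : Fin (2 * N) := ⟨j, by omega⟩ with ha
  set b : Fin (2 * N) := ⟨j + 1, hj⟩ with hb
  set l := 𝓝[chamber (2 * N)] x₀ with hl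
  have hproj : ∀ i, Tendsto (fun x : Fin (2 * N) → ℝ => x i) l (𝓝 (x₀ i)) := fun i =>
    ((continuous_apply i).tendsto x₀).mono_left nhdsWithin_le_nhds
  have hmem : ∀ᶠ x in l, x ∈ chamber (2 * N) := self_mem_nhdsWithin
  have hpos : ∀ᶠ x in l, 0 < x b - x a := hmem.mono fun x hx =>
    sub_pos.2 (hx a b (by simp [ha, hb]))
  have hδ : ∀ᶠ x in l, x b - x a ≠ 0 := hpos.mono fun x hx => hx.ne'
  have hne : ∀ i : Fin (2 * N), i.val ≠ j → i.val ≠ j + 1 → x₀ a - x₀ i ≠ 0 := by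
    intro i h h'
    rcases lt_or_gt_of_ne h with h2 | h2
    · exact (sub_pos.2 (hx₀ i a (by simpa [ha, Fin.lt_def] using h2) h' (by simp [ha]))).ne'
    · exact (sub_neg.2 (hx₀ a i (by simpa [ha, Fin.lt_def] using h2) (by simp [ha]) h')).ne
  have hP : Tendsto (outerBlock σ j) l (𝓝 (outerBlock σ j x₀)) := by
    refine tendsto_finsetProd _ fun p hp => ?_
    simp only [mem_filter, mem_univ, true_and] at hp
    exact ((hproj p.2).sub (hproj p.1)).rpow_const
      (Or.inl (sub_pos.2 (hx₀ _ _ hp.1 hp.2.2.1 hp.2.2.2.2)).ne')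
  -- The logarithmic derivative of the interaction at the fusion point.
  have hLδ : Tendsto (fun x => logRatio σ j hj x / (x b - x a)) l
      (𝓝 (∑ i ∈ univ.filter (fun i : Fin (2 * N) => i.val ≠ j ∧ i.val ≠ j + 1),
        σ i / 2 * ((x₀ a - x₀ i)⁻¹ * 1))) := by
    simp only [logRatio, sum_div, mul_div_assoc]
    refine tendsto_finsetSum _ fun i hi => Tendsto.const_mul _ ?_
    simp only [mem_filter, mem_univ, true_and] at hi
    refine tendsto_sub_div_of_hasStrictDerivAt (Real.hasStrictDerivAt_log (hne i hi.1 hi.2))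
      ?_ ((hproj a).sub (hproj i)) hδ ?_
    · rw [← hfuse]
      exact (hproj b).sub (hproj i)
    · refine tendsto_const_nhds.congr' (hδ.mono fun x hx => ?_)
      change 1 = (x b - x i - (x a - x i)) / (x b - x a)
      rw [sub_sub_sub_cancel_right, div_self hx]
  have hL : Tendsto (logRatio σ j hj) l (𝓝 0) := by
    have h := hLδ.mul ((hproj b).sub (hproj a))
    rw [hfuse, sub_self, mul_zero] at h
    exact h.congr' (hδ.mono fun x hx => div_mul_cancel₀ _ hx)
  have hE := tendsto_sub_div_of_hasStrictDerivAt (b := fun _ => 0)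
    ((Real.hasStrictDerivAt_exp (0 : ℝ)).sub (hasStrictDerivAt_id (0 : ℝ)).neg.exp)
    hL tendsto_const_nhds hδ (by simpa using hLδ)
  have hV : Vfuse σ j hj x₀ = outerBlock σ j x₀ * ((2 : ℝ) *
      ∑ i ∈ univ.filter (fun i : Fin (2 * N) => i.val ≠ j ∧ i.val ≠ j + 1),
        σ i / 2 * (x₀ a - x₀ i)⁻¹) := by
    rw [Vfuse, ← outerBlock]
    congr 1
    rw [mul_sum]
    refine sum_congr rfl fun i _ => ?_
    change σ i * σ a / (x₀ i - x₀ a) = _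
    rw [h0, ← neg_sub (x₀ a) (x₀ i), div_neg, div_eq_mul_inv]
    ring
  rw [hV]
  have hlim := hP.mul hE
  refine (hlim.congr' ?_).trans_eq ?_
  · filter_upwards [hmem, hpos] with x hx hx'
    rw [cblock_eq_of_extremum σ j hj 1 (by norm_num) h0 h1 x hx,
      cblock_eq_of_extremum τ j hj (-1) (by norm_num) (by simp [hτ]) (by simp [hτ]) x hx,
      houter, hratio]
    have hpow : (x b - x a) ^ (-(1 : ℝ) / 2) / (x b - x a) ^ ((1 : ℝ) / 2) = (x b - x a)⁻¹ := by
      rw [← Real.rpow_sub hx', ← Real.rpow_neg_one]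
      norm_num
    rw [← mul_sub, ← sub_mul, mul_div_assoc, mul_div_assoc, hpow, div_eq_mul_inv]
    simp
  · norm_num
end
end

section
/- Let N ≥ 1 and let σ be the step sequence of a Dyck path of length 2N with a local minimum at j (σ(j)=−1, σ(j+1)=+1), for some j ∈ {1,…,2N−1}. Then the function F = V_{σ/∨_j} of the variables (x_1,…,x_{j−1},ξ,x_{j+2},…,x_{2N}) satisfies, for every n ∈ {1,…,2N}∖{j,j+1} and at every point of the chamber x_1<⋯<x_{j−1}<ξ<x_{j+2}<⋯<x_{2N}, the second-order PDE (κ=4, h=1/4, H=1): ∂²F/∂x_n² = Σ_{i∉{j,j+1,n}} ( (1/4)·F/(x_i−x_n)² − (∂F/∂x_i)/(x_i−x_n) ) + F/(ξ−x_n)² − (∂F/∂ξ)/(ξ−x_n). -/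
/-! The function factors on the chamber as `F = U · S`, where
`U = ∏_{t<s} (x_s - x_t)^{σ_t σ_s / 2}` does not involve `ξ` and
`S = ∑_i σ_i σ_j / (x_i - ξ)`. With the logarithmic derivatives
`g_i = ∂_i U / U = ∑_{k ≠ i} σ_i σ_k / (2 (x_i - x_k))` the equation splits into two identities
between rational functions, one for the terms that carry the factor `S` and one for the others.

* `coulomb_identity`: `g_n² + ∂_n g_n = ∑_{i ≠ n} (1/4 (x_i - x_n)⁻² - g_i / (x_i - x_n))`, the
  second-order equation for `U` itself. It comes from symmetrising the double sum over `i ≠ k`.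
* `fused_identity`: `2 g_n ∂_n S + ∂_n² S` equals
  `-∑_{i ≠ n} ∂_i S / (x_i - x_n) + S / (ξ - x_n)² - ∂_ξ S / (ξ - x_n)`. It holds separately for
  each summand index `i`, by partial fractions.

Both use only `σ_i² = 1`. -/

open Filter Finset
open scoped BigOperators Classical Topology

noncomputable section

/-! ### Partial derivatives -/

/-- `f` is (totally) differentiable at `x` and its `i`-th partial derivative there is `f'`. -/
def HasPD {m : ℕ} (i : Fin m) (f : (Fin m → ℝ) → ℝ) (f' : ℝ) (x : Fin m → ℝ) : Prop :=
  ∃ L : (Fin m → ℝ) →L[ℝ] ℝ, HasFDerivAt f L x ∧ L (Pi.single i 1) = f'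

namespace HasPD

variable {m : ℕ} {i : Fin m} {f g : (Fin m → ℝ) → ℝ} {f' g' : ℝ} {x : Fin m → ℝ}

lemma pd_eq (h : HasPD i f f' x) : pd i f x = f' := by
  obtain ⟨L, hL, rfl⟩ := h
  simp [pd, hL.fderiv]

lemma congr (h : HasPD i f f' x) (e : g =ᶠ[𝓝 x] f) : HasPD i g f' x := by
  obtain ⟨L, hL, rfl⟩ := h
  exact ⟨L, hL.congr_of_eventuallyEq e, rfl⟩

lemma add (hf : HasPD i f f' x) (hg : HasPD i g g' x) :
    HasPD i (fun y => f y + g y) (f' + g') x := by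
  obtain ⟨L, hL, rfl⟩ := hf
  obtain ⟨M, hM, rfl⟩ := hg
  exact ⟨L + M, hL.add hM, by simp⟩

lemma mul (hf : HasPD i f f' x) (hg : HasPD i g g' x) :
    HasPD i (fun y => f y * g y) (f' * g x + f x * g') x := by
  obtain ⟨L, hL, rfl⟩ := hf
  obtain ⟨M, hM, rfl⟩ := hg
  exact ⟨_, hL.mul hM, by simp; ring⟩

lemma comp {φ : ℝ → ℝ} {φ' : ℝ} (hφ : HasDerivAt φ φ' (f x)) (hf : HasPD i f f' x) :
    HasPD i (fun y => φ (f y)) (φ' * f') x := by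
  obtain ⟨L, hL, rfl⟩ := hf
  exact ⟨_, hφ.comp_hasFDerivAt x hL, by simp⟩

lemma sum {ι : Type*} {s : Finset ι} {F : ι → (Fin m → ℝ) → ℝ} {F' : ι → ℝ}
    (h : ∀ k ∈ s, HasPD i (F k) (F' k) x) :
    HasPD i (fun y => ∑ k ∈ s, F k y) (∑ k ∈ s, F' k) x := by
  choose! L hL hL' using h
  refine ⟨∑ k ∈ s, L k, HasFDerivAt.fun_sum hL, ?_⟩
  simp only [_root_.sum_apply]
  exact Finset.sum_congr rfl hL'

lemma sub_coord (i a b : Fin m) (x : Fin m → ℝ) :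
    HasPD i (fun y => y a - y b)
      ((if a = i then 1 else 0) - (if b = i then 1 else 0)) x := by
  refine ⟨_, (hasFDerivAt_apply a x).sub (hasFDerivAt_apply b x), ?_⟩
  simp [Pi.single_apply]

end HasPD

/-! ### Rational function identities -/

/-- The logarithmic derivative of `∏_{t<s} (x_s - x_t)^{σ_t σ_s / 2}` in `x_i`. -/
def logD {m : ℕ} (A : Finset (Fin m)) (σ : Fin m → ℝ) (i : Fin m) (x : Fin m → ℝ) : ℝ :=
  ∑ k ∈ A.erase i, σ i * σ k / 2 / (x i - x k)

lemma sum_erase_comm {m : ℕ} (B : Finset (Fin m)) (f : Fin m → Fin m → ℝ) :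
    ∑ i ∈ B, ∑ k ∈ B.erase i, f i k = ∑ i ∈ B, ∑ k ∈ B.erase i, f k i := by
  apply Finset.sum_comm'
  intro a b
  simp only [Finset.mem_erase]
  tauto

lemma coulomb_identity {m : ℕ} (A : Finset (Fin m)) (σ : Fin m → ℝ)
    (hσ : ∀ i, σ i * σ i = 1) (x : Fin m → ℝ)
    (hx : ∀ i ∈ A, ∀ k ∈ A, i ≠ k → x i - x k ≠ 0) (n : Fin m) (hn : n ∈ A) :
    logD A σ n x ^ 2 + ∑ k ∈ A.erase n, -(σ n * σ k / 2) / (x n - x k) ^ 2 =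
      ∑ i ∈ A.erase n, ((1 / 4) / (x i - x n) ^ 2 - logD A σ i x / (x i - x n)) := by
  set B := A.erase n with hB
  have hne : ∀ i ∈ B, x i - x n ≠ 0 := fun i hi =>
    hx i (Finset.mem_of_mem_erase hi) n hn (Finset.ne_of_mem_erase hi)
  have hsq : logD A σ n x ^ 2 = ∑ i ∈ B, (1 / 4) / (x i - x n) ^ 2 +
      ∑ i ∈ B, ∑ k ∈ B.erase i, σ i * σ k / 4 / ((x i - x n) * (x k - x n)) := by
    rw [logD, sq, Finset.sum_mul_sum, ← Finset.sum_add_distrib]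
    refine Finset.sum_congr rfl fun i hi => ?_
    rw [← Finset.add_sum_erase _ _ hi]
    congr 1
    · have h1 := hne i hi
      have h2 : x n - x i ≠ 0 := by rw [← neg_sub]; exact neg_ne_zero.2 h1
      have h3 : (x n - x i) * (x n - x i) = (x i - x n) ^ 2 := by ring
      rw [div_mul_div_comm, h3]
      congr 1
      linear_combination (σ i * σ i / 4) * hσ n + (1 / 4) * hσ i
    · refine Finset.sum_congr rfl fun k hk => ?_
      have h3 : (x n - x i) * (x n - x k) = (x i - x n) * (x k - x n) := by ring
      rw [div_mul_div_comm, h3]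
      congr 1
      linear_combination (σ i * σ k / 4) * hσ n
  have hg : ∀ i ∈ B, logD A σ i x / (x i - x n) = σ n * σ i / 2 / (x n - x i) ^ 2 +
      ∑ k ∈ B.erase i, σ i * σ k / 2 / ((x i - x k) * (x i - x n)) := by
    intro i hi
    have hni : n ∈ A.erase i := Finset.mem_erase.2 ⟨(Finset.ne_of_mem_erase hi).symm, hn⟩
    rw [logD, ← Finset.add_sum_erase _ _ hni, add_div, Finset.sum_div, hB,
      Finset.erase_right_comm]
    congr 1
    · rw [div_div, show (x n - x i) ^ 2 = (x i - x n) * (x i - x n) by ring, mul_comm (σ i)]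
    · refine Finset.sum_congr rfl fun k hk => ?_
      rw [div_div]
  have hsymm : ∑ i ∈ B, ∑ k ∈ B.erase i, σ i * σ k / 2 / ((x i - x k) * (x i - x n)) =
      -∑ i ∈ B, ∑ k ∈ B.erase i, σ i * σ k / 4 / ((x i - x n) * (x k - x n)) := by
    -- Average the double sum with its transpose.
    have h := sum_erase_comm B fun i k => σ i * σ k / 2 / ((x i - x k) * (x i - x n))
    have h2 : ∑ i ∈ B, ∑ k ∈ B.erase i, σ i * σ k / 2 / ((x i - x k) * (x i - x n)) +
        ∑ i ∈ B, ∑ k ∈ B.erase i, σ k * σ i / 2 / ((x k - x i) * (x k - x n)) =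
        -2 * ∑ i ∈ B, ∑ k ∈ B.erase i, σ i * σ k / 4 / ((x i - x n) * (x k - x n)) := by
      rw [← Finset.sum_add_distrib, Finset.mul_sum]
      refine Finset.sum_congr rfl fun i hi => ?_
      rw [← Finset.sum_add_distrib, Finset.mul_sum]
      refine Finset.sum_congr rfl fun k hk => ?_
      have hkB := Finset.mem_of_mem_erase hk
      have h1 := hne i hi
      have h2 := hne k hkB
      have h3 := hx i (Finset.mem_of_mem_erase hi) k (Finset.mem_of_mem_erase hkB)
        (Finset.ne_of_mem_erase hk).symm
      have h4 : x k - x i ≠ 0 := by rw [← neg_sub]; exact neg_ne_zero.2 h3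
      rw [show x k - x i = -(x i - x k) by ring]
      field_simp
      ring
    linarith
  rw [Finset.sum_sub_distrib, Finset.sum_congr rfl hg, Finset.sum_add_distrib, hsymm, hsq]
  simp only [neg_div, Finset.sum_neg_distrib]
  ring

lemma fused_identity {m : ℕ} (A : Finset (Fin m)) (σ : Fin m → ℝ)
    (hσ : ∀ i, σ i * σ i = 1) (x : Fin m → ℝ) (c ξ : ℝ)
    (hx : ∀ i ∈ A, ∀ k ∈ A, i ≠ k → x i - x k ≠ 0) (hξ : ∀ i ∈ A, x i - ξ ≠ 0)
    (n : Fin m) (hn : n ∈ A) :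
    2 * logD A σ n x * (-(σ n * c) / (x n - ξ) ^ 2) + 2 * (σ n * c) / (x n - ξ) ^ 3 =
      -∑ i ∈ A.erase n, (-(σ i * c) / (x i - ξ) ^ 2) / (x i - x n) +
        (∑ i ∈ A, σ i * c / (x i - ξ)) / (ξ - x n) ^ 2 -
        (∑ i ∈ A, σ i * c / (x i - ξ) ^ 2) / (ξ - x n) := by
  have hnξ := hξ n hn
  rw [← Finset.add_sum_erase A _ hn, ← Finset.add_sum_erase A _ hn, logD,
    show ξ - x n = -(x n - ξ) by ring]
  have key : 2 * (∑ k ∈ A.erase n, σ n * σ k / 2 / (x n - x k)) *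
      (-(σ n * c) / (x n - ξ) ^ 2) =
      -∑ i ∈ A.erase n, (-(σ i * c) / (x i - ξ) ^ 2) / (x i - x n) +
        (∑ i ∈ A.erase n, σ i * c / (x i - ξ)) / (x n - ξ) ^ 2 +
        (∑ i ∈ A.erase n, σ i * c / (x i - ξ) ^ 2) / (x n - ξ) := by
    rw [Finset.mul_sum, Finset.sum_mul, Finset.sum_div, Finset.sum_div, ← Finset.sum_neg_distrib,
      ← Finset.sum_add_distrib, ← Finset.sum_add_distrib]
    refine Finset.sum_congr rfl fun i hi => ?_
    have h1 := hξ i (Finset.mem_of_mem_erase hi)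
    have h2 := hx i (Finset.mem_of_mem_erase hi) n hn (Finset.ne_of_mem_erase hi)
    have e : 2 * (σ n * σ i / 2 / (x n - x i)) * (-(σ n * c) / (x n - ξ) ^ 2) =
        (σ n * σ n) * (σ i * c / ((x i - x n) * (x n - ξ) ^ 2)) := by
      rw [show x n - x i = -(x i - x n) by ring]
      field_simp
    rw [e, hσ n]
    field_simp
    ring
  rw [key]
  generalize ∑ i ∈ A.erase n, -(σ i * c) / (x i - ξ) ^ 2 / (x i - x n) = X
  generalize ∑ i ∈ A.erase n, σ i * c / (x i - ξ) = Y
  generalize ∑ i ∈ A.erase n, σ i * c / (x i - ξ) ^ 2 = Z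
  field_simp
  ring

/-! ### The chamber and the two factors -/

/-- The indices other than `j` and `j + 1`. -/
def keepIdx (m j : ℕ) : Finset (Fin m) :=
  univ.filter fun i : Fin m => i.val ≠ j ∧ i.val ≠ j + 1

lemma fusedChamber_isOpen (m j : ℕ) : IsOpen (fusedChamber m j) := by
  simp only [fusedChamber, Set.ofPred_forall]
  exact isOpen_iInter_of_finite fun k => isOpen_iInter_of_finite fun l =>
    isOpen_iInter_of_finite fun _ => isOpen_iInter_of_finite fun _ =>
    isOpen_iInter_of_finite fun _ => isOpen_lt (continuous_apply k) (continuous_apply l)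

lemma fusedChamber_sub_ne {m j : ℕ} {x : Fin m → ℝ} (hx : x ∈ fusedChamber m j) {i k : Fin m}
    (hi : i.val ≠ j + 1) (hk : k.val ≠ j + 1) (hik : i ≠ k) : x i - x k ≠ 0 := by
  rcases lt_or_gt_of_ne hik with h | h
  · exact (sub_neg.2 (hx i k h hi hk)).ne
  · exact ne_of_gt (sub_pos.2 (hx k i h hk hi))

/-- The unfused factor `∏_{t<s} (x_s - x_t)^{σ_t σ_s / 2}` over the indices other than
`j, j + 1`. -/
def Upart {m : ℕ} (σ : Fin m → ℝ) (j : ℕ) (x : Fin m → ℝ) : ℝ :=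
  ∏ p ∈ univ.filter (fun p : Fin m × Fin m =>
      p.1 < p.2 ∧ p.1.val ≠ j ∧ p.1.val ≠ j + 1 ∧ p.2.val ≠ j ∧ p.2.val ≠ j + 1),
    (x p.2 - x p.1) ^ (σ p.1 * σ p.2 / 2)

/-- The sum `∑_i σ_i c / (x_i - x_q)`, where `q` carries the fused point. -/
def Spart {m : ℕ} (A : Finset (Fin m)) (σ : Fin m → ℝ) (c : ℝ) (q : Fin m)
    (x : Fin m → ℝ) : ℝ :=
  ∑ i ∈ A, σ i * c / (x i - x q)

lemma Upart_hasPD {m : ℕ} (σ : Fin m → ℝ) (j : ℕ) (i : Fin m) {x : Fin m → ℝ}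
    (hx : x ∈ fusedChamber m j) :
    HasPD i (Upart σ j) (Upart σ j x *
      if i ∈ keepIdx m j then logD (keepIdx m j) σ i x else 0) x := by
  set A := keepIdx m j with hA
  set P := univ.filter (fun p : Fin m × Fin m =>
      p.1 < p.2 ∧ p.1.val ≠ j ∧ p.1.val ≠ j + 1 ∧ p.2.val ≠ j ∧ p.2.val ≠ j + 1) with hP
  have hexp : ∀ y ∈ fusedChamber m j, Upart σ j y =
      Real.exp (∑ p ∈ P, Real.log (y p.2 - y p.1) * (σ p.1 * σ p.2 / 2)) := by
    intro y hy
    rw [Real.exp_sum]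
    refine Finset.prod_congr rfl fun p hp => ?_
    obtain ⟨h1, h2, h3, h4, h5⟩ := (Finset.mem_filter.1 hp).2
    exact Real.rpow_def_of_pos (sub_pos.2 (hy _ _ h1 h3 h5)) _
  have hpd : HasPD i (fun y => ∑ p ∈ P, (σ p.1 * σ p.2 / 2) * Real.log (y p.2 - y p.1))
      (∑ p ∈ P, (σ p.1 * σ p.2 / 2) * ((x p.2 - x p.1)⁻¹ *
        ((if p.2 = i then 1 else 0) - (if p.1 = i then 1 else 0)))) x := by
    refine HasPD.sum fun p hp => ?_
    obtain ⟨h1, h2, h3, h4, h5⟩ := (Finset.mem_filter.1 hp).2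
    have h := HasPD.comp (Real.hasDerivAt_log (sub_pos.2 (hx _ _ h1 h3 h5)).ne')
      (HasPD.sub_coord i p.2 p.1 x)
    exact HasPD.comp (φ := fun t => (σ p.1 * σ p.2 / 2) * t)
      (by simpa using (hasDerivAt_id _).const_mul (σ p.1 * σ p.2 / 2)) h
  have hval : (∑ p ∈ P, (σ p.1 * σ p.2 / 2) * ((x p.2 - x p.1)⁻¹ *
        ((if p.2 = i then 1 else 0) - (if p.1 = i then 1 else 0)))) =
      if i ∈ A then logD A σ i x else 0 := by
    have hPA : P = (A ×ˢ A).filter fun p => p.1 < p.2 := by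
      ext p
      simp only [hP, hA, keepIdx, Finset.mem_filter, Finset.mem_product, Finset.mem_univ,
        true_and]
      tauto
    rw [hPA, Finset.sum_filter, Finset.sum_product]
    -- Separate the pairs with second entry `i` from those with first entry `i`.
    have hsplit : ∀ a ∈ A, ∀ b ∈ A, (if a < b then (σ a * σ b / 2) * ((x b - x a)⁻¹ *
        ((if b = i then 1 else 0) - (if a = i then 1 else 0))) else 0) =
        (if b = i then (if a < b then (σ a * σ b / 2) * (x b - x a)⁻¹ else 0) else 0) -
        (if a = i then (if a < b then (σ a * σ b / 2) * (x b - x a)⁻¹ else 0) else 0) := by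
      intro a _ b _
      split_ifs <;> ring
    rw [Finset.sum_congr rfl fun a ha => Finset.sum_congr rfl (hsplit a ha)]
    simp only [Finset.sum_sub_distrib]
    rw [Finset.sum_comm (s := A) (t := A) (f := fun a b => if a = i then _ else _)]
    simp only [Finset.sum_ite_eq']
    by_cases hi : i ∈ A
    · simp only [hi, if_true]
      rw [← Finset.sum_sub_distrib, logD, ← Finset.add_sum_erase A _ hi]
      simp only [lt_irrefl, if_false, sub_zero, zero_add]
      refine Finset.sum_congr rfl fun k hk => ?_
      rcases lt_or_gt_of_ne (Finset.ne_of_mem_erase hk) with h | h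
      · simp only [h, if_true, h.not_gt, if_false]
        ring
      · simp only [h, if_true, h.not_gt, if_false]
        rw [show x k - x i = -(x i - x k) by ring, inv_neg]
        ring
    · simp [hi]
  rw [hval] at hpd
  rw [hexp x hx]
  have h := HasPD.comp (Real.hasDerivAt_exp _) hpd
  simp only [mul_comm (σ _ * σ _ / 2)] at h
  refine h.congr ?_
  filter_upwards [(fusedChamber_isOpen m j).mem_nhds hx] with y hy using hexp y hy

lemma hasDerivAt_const_div (c : ℝ) {t : ℝ} (ht : t ≠ 0) :
    HasDerivAt (fun s => c / s) (-c / t ^ 2) t := by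
  have h := (hasDerivAt_inv ht).const_mul c
  rw [show -c / t ^ 2 = c * -(t ^ 2)⁻¹ by ring]
  simpa only [div_eq_mul_inv] using h

lemma hasDerivAt_const_div_sq (c : ℝ) {t : ℝ} (ht : t ≠ 0) :
    HasDerivAt (fun s => c / s ^ 2) (-(2 * c) / t ^ 3) t := by
  have h := HasDerivAt.comp (h := fun s : ℝ => s ^ 2) t
    (hasDerivAt_const_div c (pow_ne_zero 2 ht)) (hasDerivAt_pow 2 t)
  have e : -(2 * c) / t ^ 3 = -c / (t ^ 2) ^ 2 * ((2 : ℕ) * t ^ (2 - 1)) := by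
    push_cast
    field_simp
  rw [e]
  exact h

lemma Spart_hasPD {m : ℕ} (A : Finset (Fin m)) (σ : Fin m → ℝ) (c : ℝ) (q : Fin m)
    {x : Fin m → ℝ} (hξ : ∀ i ∈ A, x i - x q ≠ 0) {i : Fin m} (hi : i ∈ A) (hiq : i ≠ q) :
    HasPD i (Spart A σ c q) (-(σ i * c) / (x i - x q) ^ 2) x := by
  have h : HasPD i (Spart A σ c q) _ x := HasPD.sum fun k hk =>
    HasPD.comp (hasDerivAt_const_div (σ k * c) (hξ k hk)) (HasPD.sub_coord i k q x)
  convert h using 1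
  simp [hiq.symm, hi]

lemma Spart_hasPD_fused {m : ℕ} (A : Finset (Fin m)) (σ : Fin m → ℝ) (c : ℝ) (q : Fin m)
    {x : Fin m → ℝ} (hξ : ∀ i ∈ A, x i - x q ≠ 0) (hq : q ∉ A) :
    HasPD q (Spart A σ c q) (∑ i ∈ A, σ i * c / (x i - x q) ^ 2) x := by
  have h : HasPD q (Spart A σ c q) _ x := HasPD.sum fun k hk =>
    HasPD.comp (hasDerivAt_const_div (σ k * c) (hξ k hk)) (HasPD.sub_coord q k q x)
  convert h using 1
  refine Finset.sum_congr rfl fun k hk => ?_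
  have : k ≠ q := fun e => hq (e ▸ hk)
  simp [this, neg_div]

lemma logD_hasPD {m : ℕ} (A : Finset (Fin m)) (σ : Fin m → ℝ) (n : Fin m) {x : Fin m → ℝ}
    (hx : ∀ k ∈ A, n ≠ k → x n - x k ≠ 0) :
    HasPD n (logD A σ n) (∑ k ∈ A.erase n, -(σ n * σ k / 2) / (x n - x k) ^ 2) x := by
  have h : HasPD n (logD A σ n) _ x := HasPD.sum fun k hk =>
    HasPD.comp (hasDerivAt_const_div (σ n * σ k / 2)
      (hx k (Finset.mem_of_mem_erase hk) (Finset.ne_of_mem_erase hk).symm))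
      (HasPD.sub_coord n n k x)
  convert h using 1
  refine Finset.sum_congr rfl fun k hk => ?_
  simp [Finset.ne_of_mem_erase hk]

/-- **Statement 11.** `V_{σ/∨_j}` satisfies the second-order PDEs (κ = 4, h = 1/4, H = 1)
in the unfused variables (the fusion point `ξ` is coordinate `j`; coordinate `j+1` is
ignored). -/
theorem Vfuse_secondOrderPDE (N : ℕ) (hN : 1 ≤ N)
    (σ : Fin (2 * N) → ℝ) (hσ : IsDyck σ)
    (j : ℕ) (hj : j + 1 < 2 * N)
    (hmin : σ ⟨j, by omega⟩ = -1 ∧ σ ⟨j + 1, hj⟩ = 1) :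
    ∀ n : Fin (2 * N), n.val ≠ j → n.val ≠ j + 1 →
      ∀ x ∈ fusedChamber (2 * N) j,
        pd n (pd n (Vfuse σ j hj)) x =
          (∑ i ∈ univ.filter (fun i : Fin (2 * N) =>
              i.val ≠ j ∧ i.val ≠ j + 1 ∧ i ≠ n),
            ((1 / 4) * Vfuse σ j hj x / (x i - x n) ^ 2 -
              pd i (Vfuse σ j hj) x / (x i - x n))) +
          Vfuse σ j hj x / (x ⟨j, by omega⟩ - x n) ^ 2 -
          pd ⟨j, by omega⟩ (Vfuse σ j hj) x / (x ⟨j, by omega⟩ - x n) := by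
  intro n hnj hnj1 x hx
  obtain ⟨hσ1, -, -⟩ := hσ
  have hsq : ∀ i, σ i * σ i = 1 := fun i => by rcases hσ1 i with h | h <;> simp [h]
  set q : Fin (2 * N) := ⟨j, by omega⟩ with hq
  set c := σ q with hc
  set A := keepIdx (2 * N) j with hA
  have memA : ∀ i, i ∈ A ↔ i.val ≠ j ∧ i.val ≠ j + 1 := fun i => by simp [hA, keepIdx]
  have hqA : q ∉ A := by simp [memA, hq]
  have hnA : n ∈ A := (memA n).2 ⟨hnj, hnj1⟩
  have neq : ∀ i ∈ A, i ≠ q := fun i hi e => hqA (e ▸ hi)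
  have hqj : q.val ≠ j + 1 := by simp [hq]
  have hF : Vfuse σ j hj = fun y => Upart σ j y * Spart A σ c q y := rfl
  have hsub : ∀ y ∈ fusedChamber (2 * N) j, ∀ i ∈ A, ∀ k ∈ A, i ≠ k → y i - y k ≠ 0 :=
    fun y hy i hi k hk hik => fusedChamber_sub_ne hy ((memA i).1 hi).2 ((memA k).1 hk).2 hik
  have hsubq : ∀ y ∈ fusedChamber (2 * N) j, ∀ i ∈ A, y i - y q ≠ 0 :=
    fun y hy i hi => fusedChamber_sub_ne hy ((memA i).1 hi).2 hqj (neq i hi)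
  have hU : ∀ y ∈ fusedChamber (2 * N) j, ∀ i ∈ A,
      HasPD i (Upart σ j) (Upart σ j y * logD A σ i y) y := by
    intro y hy i hi
    simpa [← hA, hi] using Upart_hasPD σ j i hy
  have hpd1 : ∀ y ∈ fusedChamber (2 * N) j, ∀ i ∈ A, pd i (Vfuse σ j hj) y =
      Upart σ j y * (logD A σ i y * Spart A σ c q y + -(σ i * c) / (y i - y q) ^ 2) := by
    intro y hy i hi
    rw [hF, ((hU y hy i hi).mul (Spart_hasPD A σ c q (hsubq y hy) hi (neq i hi))).pd_eq]
    ring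
  have hpdq : pd q (Vfuse σ j hj) x =
      Upart σ j x * ∑ i ∈ A, σ i * c / (x i - x q) ^ 2 := by
    have h : HasPD q (Upart σ j) 0 x := by
      simpa [← hA, hqA] using Upart_hasPD σ j q hx
    rw [hF, (h.mul (Spart_hasPD_fused A σ c q (hsubq x hx) hqA)).pd_eq]
    ring
  have hT : HasPD n (fun y => -(σ n * c) / (y n - y q) ^ 2)
      (2 * (σ n * c) / (x n - x q) ^ 3) x := by
    have h := HasPD.comp (hasDerivAt_const_div_sq (-(σ n * c)) (hsubq x hx n hnA))
      (HasPD.sub_coord n n q x)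
    convert h using 1
    simp [(neq n hnA).symm]
  have hpd2 := ((hU x hx n hnA).mul
    (((logD_hasPD A σ n (hsub x hx n hnA)).mul
      (Spart_hasPD A σ c q (hsubq x hx) hnA (neq n hnA))).add hT)).congr
    (g := pd n (Vfuse σ j hj)) (by
      filter_upwards [(fusedChamber_isOpen _ j).mem_nhds hx] with y hy
      exact hpd1 y hy n hnA)
  have hfilter : univ.filter (fun i : Fin (2 * N) => i.val ≠ j ∧ i.val ≠ j + 1 ∧ i ≠ n) =
      A.erase n := by
    ext i
    simp only [Finset.mem_filter, Finset.mem_univ, true_and, Finset.mem_erase, memA]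
    tauto
  have hsum : ∑ i ∈ A.erase n, ((1 / 4) * Vfuse σ j hj x / (x i - x n) ^ 2 -
        pd i (Vfuse σ j hj) x / (x i - x n)) =
      Upart σ j x * (Spart A σ c q x *
        (∑ i ∈ A.erase n, ((1 / 4) / (x i - x n) ^ 2 - logD A σ i x / (x i - x n))) -
        ∑ i ∈ A.erase n, (-(σ i * c) / (x i - x q) ^ 2) / (x i - x n)) := by
    rw [Finset.mul_sum, ← Finset.sum_sub_distrib, Finset.mul_sum]
    refine Finset.sum_congr rfl fun i hi => ?_
    rw [hpd1 x hx i (Finset.mem_of_mem_erase hi), hF]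
    ring
  have h1 := coulomb_identity A σ hsq x (hsub x hx) n hnA
  have h2 := fused_identity A σ hsq x c (x q) (hsub x hx) (hsubq x hx) n hnA
  rw [hpd2.pd_eq, hfilter, hsum, hpdq, ← h1, hF]
  change _ = _ + Upart σ j x * Spart A σ c q x / (x q - x n) ^ 2 - _
  change _ = _ + Spart A σ c q x / _ - _ at h2
  linear_combination Upart σ j x * h2
end
end
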